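/- Let M be a complete Riemannian manifold isometrically immersed as a submanifold of a space form, and let ν₁ be a parallel sub-bundle of the normal bundle of M (parallel with respect to the normal connection). Define the generalized nullity distribution 𝒩¹_p = {v ∈ T_pM : A_ξ v = 0 for all ξ ∈ ν₁(p)}, the common kernel of the shape operators of vectors in ν₁. Then every maximal integral manifold of 𝒩¹ through a point where dim 𝒩¹_p attains its minimal value over M is a complete Riemannian manifold with the induced metric. -/

import Mathlib

noncomputable section

open Set

/-- The three model space forms: Euclidean space, the round sphere, hyperbolic space. -/
inductive SpaceFormKind : Type
  | euclidean : SpaceFormKind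
  | sphere : SpaceFormKind
  | hyperbolic : SpaceFormKind

/-- The sign of the `i`-th coordinate in the ambient bilinear form: for the hyperbolic case the
ambient linear space is the Lorentz space `ℝ^{D-1,1}` whose last coordinate is timelike. -/
def formSign (k : SpaceFormKind) (D : ℕ) (i : Fin D) : ℝ :=
  match k with
  | .hyperbolic => if (i : ℕ) + 1 = D then -1 else 1
  | _ => 1

/-- The ambient bilinear form: the Euclidean inner product in the euclidean and spherical cases,
the Lorentz (Minkowski) form in the hyperbolic case. -/
def aForm (k : SpaceFormKind) {D : ℕ} (x y : EuclideanSpace ℝ (Fin D)) : ℝ :=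
  ∑ i, formSign k D i * x i * y i

/-- The space form, realized inside its ambient linear space: all of `ℝ^D`, the unit sphere,
or the hyperboloid model of hyperbolic space in Lorentz space. -/
def spaceForm (k : SpaceFormKind) (D : ℕ) : Set (EuclideanSpace ℝ (Fin D)) :=
  match k with
  | .euclidean => Set.univ
  | .sphere => {x | aForm .sphere x x = 1}
  | .hyperbolic => {x | aForm .hyperbolic x x = -1 ∧ ∀ i : Fin D, (i : ℕ) + 1 = D → 0 < x i}

/-- The normal space of the space form itself inside the ambient linear space at a point `p`:
trivial in the euclidean case, and spanned by the position vector in the other two cases. -/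
def radialAt (k : SpaceFormKind) {D : ℕ} (p : EuclideanSpace ℝ (Fin D)) :
    Submodule ℝ (EuclideanSpace ℝ (Fin D)) :=
  match k with
  | .euclidean => ⊥
  | _ => Submodule.span ℝ {p}

/-- The tangent space of a subset `S ⊆ ℝ^D` at `p`: the span of all velocities at `0` of smooth
curves inside `S` passing through `p` at time `0`. -/
def TangentAt {D : ℕ} (S : Set (EuclideanSpace ℝ (Fin D))) (p : EuclideanSpace ℝ (Fin D)) :
    Submodule ℝ (EuclideanSpace ℝ (Fin D)) :=
  Submodule.span ℝ {v | ∃ c : ℝ → EuclideanSpace ℝ (Fin D),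
    ContDiff ℝ (⊤ : ℕ∞) c ∧ (∀ t, c t ∈ S) ∧ c 0 = p ∧ deriv c 0 = v}

/-- `φ : U → ℝ^D` is a (smooth, embedded) local parametrization of `S` around `p`. -/
structure IsLocalParam {D : ℕ} (S : Set (EuclideanSpace ℝ (Fin D))) (n : ℕ)
    (φ : EuclideanSpace ℝ (Fin n) → EuclideanSpace ℝ (Fin D))
    (U : Set (EuclideanSpace ℝ (Fin n))) (p : EuclideanSpace ℝ (Fin D)) : Prop where
  isOpen : IsOpen U
  smooth : ContDiffOn ℝ (⊤ : ℕ∞) φ U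
  immersion : ∀ x ∈ U, Function.Injective (fderivWithin ℝ φ U x)
  injOn : Set.InjOn φ U
  openImage : ∃ V, IsOpen V ∧ φ '' U = S ∩ V
  mem : p ∈ φ '' U
  embedding : ∃ ψ, ContinuousOn ψ (φ '' U) ∧ ∀ x ∈ U, ψ (φ x) = x

/-- `S ⊆ ℝ^D` is an `n`-dimensional smooth embedded submanifold. -/
def IsSubmanifold {D : ℕ} (S : Set (EuclideanSpace ℝ (Fin D))) (n : ℕ) : Prop :=
  ∀ p ∈ S, ∃ φ U, IsLocalParam S n φ U p

/-- The nullity space at `p` of the second fundamental form `α` of `S`, viewed as a submanifold of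
the space form of kind `k`:  a tangent vector `v` is in the nullity iff `α(v, w) = 0` for all
`w ∈ T_pS`; concretely, iff for every smooth tangent vector field `W` along a smooth curve `c` in
`S` with `c(0) = p`, `c'(0) = v`, the derivative `W'(0)` has no component normal to `S` inside the
space form, i.e. `W'(0)` lies in the sum of `T_pS` and the normal space of the space form itself. -/
def nullityAt (k : SpaceFormKind) {D : ℕ} (S : Set (EuclideanSpace ℝ (Fin D)))
    (p : EuclideanSpace ℝ (Fin D)) : Set (EuclideanSpace ℝ (Fin D)) :=
  {v | v ∈ TangentAt S p ∧ ∀ c W : ℝ → EuclideanSpace ℝ (Fin D),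
    ContDiff ℝ (⊤ : ℕ∞) c → (∀ t, c t ∈ S) → c 0 = p → deriv c 0 = v →
    ContDiff ℝ (⊤ : ℕ∞) W → (∀ t, W t ∈ TangentAt S (c t)) →
    deriv W 0 ∈ TangentAt S p ⊔ radialAt k p}

/-- The index of nullity of `S` at `p`. -/
def nullityIndex (k : SpaceFormKind) {D : ℕ} (S : Set (EuclideanSpace ℝ (Fin D)))
    (p : EuclideanSpace ℝ (Fin D)) : ℕ :=
  Set.finrank ℝ (nullityAt k S p)

/-- `γ : ℝ → ℝ^D` is a geodesic of the Riemannian (resp. Lorentzian-induced) submanifold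
`S` of the space form of kind `k`: a smooth curve in `S` whose acceleration is orthogonal,
with respect to the ambient bilinear form, to all tangent spaces of `S`. -/
structure IsGeodesicOn (k : SpaceFormKind) {D : ℕ} (S : Set (EuclideanSpace ℝ (Fin D)))
    (γ : ℝ → EuclideanSpace ℝ (Fin D)) : Prop where
  smooth : ContDiff ℝ (⊤ : ℕ∞) γ
  mem : ∀ t, γ t ∈ S
  accel_normal : ∀ t, ∀ v ∈ TangentAt S (γ t), aForm k (deriv (deriv γ) t) v = 0

/-- `S` is a (geodesically, equivalently metrically) complete Riemannian manifold: every
initial condition gives rise to a geodesic defined on all of `ℝ`. -/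
def GeodComplete (k : SpaceFormKind) {D : ℕ} (S : Set (EuclideanSpace ℝ (Fin D))) : Prop :=
  ∀ p ∈ S, ∀ v ∈ TangentAt S p, ∃ γ, IsGeodesicOn k S γ ∧ γ 0 = p ∧ deriv γ 0 = v

/-- The set of points of `S` where the index of nullity is minimal. -/
def minNullitySet (k : SpaceFormKind) {D : ℕ} (S : Set (EuclideanSpace ℝ (Fin D))) :
    Set (EuclideanSpace ℝ (Fin D)) :=
  {q | q ∈ S ∧ ∀ r ∈ S, nullityIndex k S q ≤ nullityIndex k S r}

/-- The maximal integral manifold (leaf) through `p` of the nullity distribution of `S`,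
restricted to the subset `A`: all points reachable from `p` by smooth curves inside `A`
everywhere tangent to the nullity distribution. -/
def leafThrough (k : SpaceFormKind) {D : ℕ} (S A : Set (EuclideanSpace ℝ (Fin D)))
    (p : EuclideanSpace ℝ (Fin D)) : Set (EuclideanSpace ℝ (Fin D)) :=
  {q | ∃ c : ℝ → EuclideanSpace ℝ (Fin D), ContDiff ℝ (⊤ : ℕ∞) c ∧ (∀ t, c t ∈ A) ∧
    (∀ t, deriv c t ∈ nullityAt k S (c t)) ∧ c 0 = p ∧ c 1 = q}

/-- The dimension of the ambient linear space: `n + k` for a submanifold `M^n ⊆ ℝ^{n+k}`,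
`n + k + 1` for `M^n ⊆ S^{n+k} ⊆ ℝ^{n+k+1}` and for `M^n ⊆ H^{n+k} ⊆ ℝ^{n+k,1}`. -/
def ambientDim (k : SpaceFormKind) (n codim : ℕ) : ℕ :=
  match k with
  | .euclidean => n + codim
  | _ => n + codim + 1

/-- `v` is a normal vector of `S` at `p` inside the space form of kind `k`: it is tangent to the
space form and orthogonal (for the ambient form) to the tangent space of `S`. -/
def IsNormalVec (k : SpaceFormKind) {D : ℕ} (S : Set (EuclideanSpace ℝ (Fin D)))
    (p v : EuclideanSpace ℝ (Fin D)) : Prop :=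
  v ∈ TangentAt (spaceForm k D) p ∧ ∀ w ∈ TangentAt S p, aForm k v w = 0

/-- `ν₁` is a rank `m` smooth sub-bundle of the normal bundle of the submanifold `S` of the space
form of kind `k`, which is parallel with respect to the normal connection, i.e. invariant under
normal parallel transport (a normal field `ξ` along a curve is normal-parallel iff its derivative
has no component normal to `S` inside the space form, i.e. `ξ' ∈ T S ⊔ radial`). -/
structure IsParallelNormalSubbundle (k : SpaceFormKind) {D : ℕ}
    (S : Set (EuclideanSpace ℝ (Fin D)))
    (ν₁ : EuclideanSpace ℝ (Fin D) → Submodule ℝ (EuclideanSpace ℝ (Fin D))) (m : ℕ) : Prop where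
  normal : ∀ p ∈ S, ∀ v ∈ ν₁ p, IsNormalVec k S p v
  rank : ∀ p ∈ S, Module.finrank ℝ (ν₁ p) = m
  smooth : ∀ p ∈ S, ∃ V ∈ nhds p,
    ∃ ξ : Fin m → (EuclideanSpace ℝ (Fin D) → EuclideanSpace ℝ (Fin D)),
      (∀ i, ContDiff ℝ (⊤ : ℕ∞) (ξ i)) ∧ ∀ q ∈ V ∩ S, ν₁ q = Submodule.span ℝ (Set.range fun i => ξ i q)
  parallel : ∀ c ξ : ℝ → EuclideanSpace ℝ (Fin D), ContDiff ℝ (⊤ : ℕ∞) c → (∀ t, c t ∈ S) →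
    ContDiff ℝ (⊤ : ℕ∞) ξ → (∀ t, IsNormalVec k S (c t) (ξ t)) →
    (∀ t, deriv ξ t ∈ TangentAt S (c t) ⊔ radialAt k (c t)) →
    ξ 0 ∈ ν₁ (c 0) → ∀ t, ξ t ∈ ν₁ (c t)

/-- The generalized nullity space `𝒩¹_p` associated to the normal sub-bundle `ν₁`: the common
kernel of the shape operators `A_ξ`, `ξ ∈ ν₁(p)`.  Concretely, a tangent vector `v` lies in
`𝒩¹_p` iff for every smooth tangent field `W` along a smooth curve `c` in `S` with `c(0) = p`,
`c'(0) = v`, one has `⟨α(v, W(0)), ξ⟩ = ⟨W'(0), ξ⟩ = 0` for all `ξ ∈ ν₁(p)`. -/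
def gNullityAt (k : SpaceFormKind) {D : ℕ} (S : Set (EuclideanSpace ℝ (Fin D)))
    (ν₁ : EuclideanSpace ℝ (Fin D) → Submodule ℝ (EuclideanSpace ℝ (Fin D)))
    (p : EuclideanSpace ℝ (Fin D)) : Set (EuclideanSpace ℝ (Fin D)) :=
  {v | v ∈ TangentAt S p ∧ ∀ c W : ℝ → EuclideanSpace ℝ (Fin D),
    ContDiff ℝ (⊤ : ℕ∞) c → (∀ t, c t ∈ S) → c 0 = p → deriv c 0 = v →
    ContDiff ℝ (⊤ : ℕ∞) W → (∀ t, W t ∈ TangentAt S (c t)) →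
    ∀ ξ ∈ ν₁ p, aForm k (deriv W 0) ξ = 0}

/-- The set of points of `S` where the dimension of the generalized nullity space is minimal. -/
def gMinNullitySet (k : SpaceFormKind) {D : ℕ} (S : Set (EuclideanSpace ℝ (Fin D)))
    (ν₁ : EuclideanSpace ℝ (Fin D) → Submodule ℝ (EuclideanSpace ℝ (Fin D))) :
    Set (EuclideanSpace ℝ (Fin D)) :=
  {q | q ∈ S ∧ ∀ r ∈ S, Set.finrank ℝ (gNullityAt k S ν₁ q) ≤ Set.finrank ℝ (gNullityAt k S ν₁ r)}

/-- The maximal integral manifold (leaf) through `p` of the generalized nullity distribution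
`𝒩¹`, restricted to the subset `A`. -/
def gLeafThrough (k : SpaceFormKind) {D : ℕ} (S : Set (EuclideanSpace ℝ (Fin D)))
    (ν₁ : EuclideanSpace ℝ (Fin D) → Submodule ℝ (EuclideanSpace ℝ (Fin D)))
    (A : Set (EuclideanSpace ℝ (Fin D))) (p : EuclideanSpace ℝ (Fin D)) :
    Set (EuclideanSpace ℝ (Fin D)) :=
  {q | ∃ c : ℝ → EuclideanSpace ℝ (Fin D), ContDiff ℝ (⊤ : ℕ∞) c ∧ (∀ t, c t ∈ A) ∧
    (∀ t, deriv c t ∈ gNullityAt k S ν₁ (c t)) ∧ c 0 = p ∧ c 1 = q}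

section
open Set Filter Topology
open scoped ContDiff

namespace GNull

section constRank
variable {V Z : Type*} [NormedAddCommGroup V] [NormedSpace ℝ V] [FiniteDimensional ℝ V]
  [NormedAddCommGroup Z] [NormedSpace ℝ Z] [FiniteDimensional ℝ Z]

lemma exists_genInverse (A : V →L[ℝ] Z) : ∃ G : Z →L[ℝ] V, ∀ v, A (G (A v)) = A v := by
  obtain ⟨g, hg⟩ := (A : V →ₗ[ℝ] Z).rangeRestrict.exists_rightInverse_of_surjective
    (LinearMap.range_rangeRestrict _)
  obtain ⟨G, hG⟩ := LinearMap.exists_extend g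
  refine ⟨LinearMap.toContinuousLinearMap G, fun v => ?_⟩
  have h1 : G (A v) = g ⟨A v, ⟨v, rfl⟩⟩ := by
    rw [← hG]; rfl
  have h2 := congrArg Subtype.val (LinearMap.congr_fun hg ⟨A v, ⟨v, rfl⟩⟩)
  simpa [h1] using h2

/-- local data near a point for a family of linear maps -/
lemma constRank_aux {Y : Type*} [NormedAddCommGroup Y] [NormedSpace ℝ Y]
    (Θ : Y → (V →L[ℝ] Z)) (x0 : Y) (hΘ : ContDiffAt ℝ 1 Θ x0) :
    ∃ (S : Y → (Z →L[ℝ] V)) (Q : Z →L[ℝ] Z), ContDiffAt ℝ 1 S x0 ∧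
      ∀ᶠ y in 𝓝 x0,
        (∀ u, Q (Θ y (u - S y (Θ y u))) = 0) ∧
        Module.finrank ℝ (LinearMap.ker (Q.comp (Θ y) : V →ₗ[ℝ] Z)) ≤
          Module.finrank ℝ (LinearMap.ker (Θ x0 : V →ₗ[ℝ] Z)) := by
  obtain ⟨G, hG⟩ := exists_genInverse (Θ x0)
  set Q : Z →L[ℝ] Z := (Θ x0).comp G with hQ
  have hQQ : ∀ z, Q (Q z) = Q z := fun z => by simp [hQ, hG]
  set Mm : Y → (Z →L[ℝ] Z) := fun y => (Q.comp ((Θ y).comp G)) + (1 - Q) with hM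
  have hM0 : Mm x0 = 1 := by
    ext z
    have := hQQ z
    simp only [hQ, ContinuousLinearMap.comp_apply] at this
    simp [hM, hQ, this]
  have hMc : ContDiffAt ℝ 1 Mm x0 := by
    simp only [hM]
    exact (contDiffAt_const.clm_comp (hΘ.clm_comp contDiffAt_const)).add contDiffAt_const
  have hinv : ContDiffAt ℝ 1 (fun y => Ring.inverse (Mm y)) x0 := by
    have h1 : ContDiffAt ℝ 1 Ring.inverse (Mm x0) := by
      rw [hM0]
      exact contDiffAt_ringInverse ℝ (1 : (Z →L[ℝ] Z)ˣ)
    exact h1.comp x0 hMc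
  refine ⟨fun y => G.comp ((Ring.inverse (Mm y)).comp Q), Q,
    contDiffAt_const.clm_comp (hinv.clm_comp contDiffAt_const), ?_⟩
  have hunit : ∀ᶠ y in 𝓝 x0, IsUnit (Mm y) := by
    have : {A : Z →L[ℝ] Z | IsUnit A} ∈ 𝓝 (Mm x0) := by
      rw [hM0]
      exact Units.isOpen.mem_nhds isUnit_one
    exact hMc.continuousAt this
  filter_upwards [hunit] with y hy
  have hkey : ∀ z, Q (Θ y (G (Ring.inverse (Mm y) (Q z)))) = Q z := by
    intro z
    set r := Ring.inverse (Mm y) (Q z) with hr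
    have h1 : Mm y r = Q z := by
      rw [hr]
      have := Ring.mul_inverse_cancel _ hy
      have h2 := congrArg (fun A : Z →L[ℝ] Z => A (Q z)) this
      simpa using h2
    have h3 : Q (Θ y (G r)) + (r - Q r) = Q z := by
      simpa [hM] using h1
    have h4 : r - Q r = 0 := by
      have h5 := congrArg Q h3
      simp only [map_add, map_sub, hQQ, sub_self, add_zero] at h5
      rw [h5] at h3
      simpa using h3
    simpa [h4] using h3
  refine ⟨fun u => ?_, ?_⟩
  · simp [hkey]
  · have h1 : LinearMap.range (Θ x0 : V →ₗ[ℝ] Z) ≤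
        LinearMap.range (Q.comp (Θ y) : V →ₗ[ℝ] Z) := by
      rintro _ ⟨v, rfl⟩
      refine ⟨G (Ring.inverse (Mm y) (Q (Θ x0 v))), ?_⟩
      have := hkey (Θ x0 v)
      have h6 : Q (Θ x0 v) = Θ x0 v := by simp [hQ, hG]
      rw [h6] at this
      simpa [h6] using this
    have h2 := Submodule.finrank_mono h1
    have h3 := LinearMap.finrank_range_add_finrank_ker (Θ x0 : V →ₗ[ℝ] Z)
    have h4 := LinearMap.finrank_range_add_finrank_ker (Q.comp (Θ y) : V →ₗ[ℝ] Z)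
    omega

lemma ker_le_comp (Q : Z →L[ℝ] Z) (A : V →L[ℝ] Z) :
    LinearMap.ker (A : V →ₗ[ℝ] Z) ≤ LinearMap.ker (Q.comp A : V →ₗ[ℝ] Z) := by
  intro v hv
  have : A v = 0 := hv
  simp [this]

lemma finrank_ker_eventually_le {Y : Type*} [NormedAddCommGroup Y] [NormedSpace ℝ Y]
    (Θ : Y → (V →L[ℝ] Z)) (x0 : Y) (hΘ : ContDiffAt ℝ 1 Θ x0) :
    ∀ᶠ y in 𝓝 x0, Module.finrank ℝ (LinearMap.ker (Θ y : V →ₗ[ℝ] Z)) ≤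
          Module.finrank ℝ (LinearMap.ker (Θ x0 : V →ₗ[ℝ] Z)) := by
  obtain ⟨S, Q, -, h⟩ := constRank_aux Θ x0 hΘ
  filter_upwards [h] with y hy
  exact (Submodule.finrank_mono (ker_le_comp Q (Θ y))).trans hy.2

lemma constRank {Y : Type*} [NormedAddCommGroup Y] [NormedSpace ℝ Y]
    (Θ : Y → (V →L[ℝ] Z)) (x0 : Y) (hΘ : ContDiffAt ℝ 1 Θ x0)
    (hmin : ∀ᶠ y in 𝓝 x0, Module.finrank ℝ (LinearMap.ker (Θ x0 : V →ₗ[ℝ] Z)) ≤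
          Module.finrank ℝ (LinearMap.ker (Θ y : V →ₗ[ℝ] Z))) :
    ∃ (S : Y → (Z →L[ℝ] V)), ContDiffAt ℝ 1 S x0 ∧
      ∀ᶠ y in 𝓝 x0, ∀ u, Θ y (u - S y (Θ y u)) = 0 := by
  obtain ⟨S, Q, hS, h⟩ := constRank_aux Θ x0 hΘ
  refine ⟨S, hS, ?_⟩
  filter_upwards [h, hmin] with y hy hm u
  have he := Submodule.eq_of_le_of_finrank_le (ker_le_comp Q (Θ y)) (hy.2.trans hm)
  have : u - S y (Θ y u) ∈ LinearMap.ker (Q.comp (Θ y) : V →ₗ[ℝ] Z) := hy.1 u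
  rw [← he] at this
  exact this

end constRank

section flow
variable {E : Type*} [NormedAddCommGroup E] [NormedSpace ℝ E] [CompleteSpace E]

lemma flow_exists (f : E → E) (z0 : E) (hf : ContDiffAt ℝ 1 f z0) (N : Set E) (hN : N ∈ 𝓝 z0) :
    ∃ r > (0:ℝ), ∃ ε > (0:ℝ), ∀ z ∈ Metric.closedBall z0 r, ∃ α : ℝ → E, α 0 = z ∧
      ∀ τ ∈ Ioo (-ε) ε, HasDerivAt α (f (α τ)) τ ∧ α τ ∈ N := by
  have ⟨ε, hε, a, r, _, _, hr, hpl⟩ := IsPicardLindelof.of_contDiffAt_one hf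
  obtain ⟨α, hα, hc⟩ := (hpl 0).exists_forall_mem_closedBall_eq_hasDerivWithinAt_continuousOn
  have h0 : α (z0, 0) = z0 := (hα z0 (Metric.mem_closedBall_self r.2)).1
  have hca : ContinuousAt α (z0, 0) := by
    refine hc.continuousAt ?_
    refine prod_mem_nhds (Metric.closedBall_mem_nhds _ (by exact_mod_cast hr)) ?_
    exact Icc_mem_nhds (by simpa using hε) (by simpa using hε)
  have hpre : α ⁻¹' N ∈ 𝓝 (z0, (0:ℝ)) := hca (by rwa [h0])
  obtain ⟨δ, hδ, hsub⟩ := Metric.mem_nhds_iff.1 hpre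
  refine ⟨min (r:ℝ) (δ/2), lt_min (by exact_mod_cast hr) (by linarith), min ε (δ/2),
    lt_min hε (by linarith), fun z hz => ⟨fun τ => α (z, τ), ?_, fun τ hτ => ⟨?_, ?_⟩⟩⟩
  · exact (hα z (Metric.closedBall_subset_closedBall (min_le_left _ _) hz)).1
  · have hτ' : τ ∈ Ioo (-ε) ε :=
      ⟨by have := hτ.1; have := min_le_left ε (δ/2); linarith, hτ.2.trans_le (min_le_left _ _)⟩
    have := (hα z (Metric.closedBall_subset_closedBall (min_le_left _ _) hz)).2 τ
      (by simpa using Ioo_subset_Icc_self hτ')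
    exact this.hasDerivAt (Icc_mem_nhds (by simpa using hτ'.1) (by simpa using hτ'.2))
  · apply hsub
    rw [Metric.mem_ball, Prod.dist_eq, max_lt_iff]
    constructor
    · have := Metric.mem_closedBall.1 hz
      have h2 := min_le_right (r:ℝ) (δ/2)
      simp only; linarith
    · have h2 := min_le_right ε (δ/2)
      simp only [Real.dist_eq, sub_zero, abs_lt]
      constructor <;> linarith [hτ.1, hτ.2]

end flow
end GNull

end

section
open Set Filter Topology
open scoped ContDiff

set_option maxSynthPendingDepth 6
set_option linter.unusedSectionVars false

namespace GNull

section core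
variable {V F M : Type*} [NormedAddCommGroup V] [NormedSpace ℝ V] [FiniteDimensional ℝ V]
  [NormedAddCommGroup F] [NormedSpace ℝ F] [FiniteDimensional ℝ F]
  [NormedAddCommGroup M] [NormedSpace ℝ M] [FiniteDimensional ℝ M]

/-- transpose with respect to the bilinear form -/
def star (B : F →L[ℝ] F →L[ℝ] ℝ) (Φ : V →L[ℝ] F) : F →L[ℝ] (V →L[ℝ] ℝ) :=
  ((ContinuousLinearMap.compL ℝ V F ℝ).flip Φ).comp B

omit [FiniteDimensional ℝ V] [FiniteDimensional ℝ F] in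
lemma star_apply (B : F →L[ℝ] F →L[ℝ] ℝ) (Φ : V →L[ℝ] F) (f : F) (w : V) :
    star B Φ f w = B f (Φ w) := rfl

/-- inverse metric -/
def gi (B : F →L[ℝ] F →L[ℝ] ℝ) (Φ : V →L[ℝ] F) : (V →L[ℝ] ℝ) →L[ℝ] V :=
  ContinuousLinearMap.inverse ((star B Φ).comp Φ)

lemma g_invertible (B : F →L[ℝ] F →L[ℝ] ℝ) (Φ : V →L[ℝ] F)
    (hpos : ∀ z, z ≠ 0 → B (Φ z) (Φ z) ≠ 0) : ((star B Φ).comp Φ).IsInvertible := by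
  have hinj : Function.Injective ((star B Φ).comp Φ : V →ₗ[ℝ] (V →L[ℝ] ℝ)) := by
    rw [injective_iff_map_eq_zero]
    intro z hz
    by_contra h
    apply hpos z h
    have := congrArg (fun l : V →L[ℝ] ℝ => l z) hz
    simpa [star_apply] using this
  have hfr : Module.finrank ℝ V = Module.finrank ℝ (V →L[ℝ] ℝ) := by
    rw [← LinearEquiv.finrank_eq (LinearMap.toContinuousLinearMap (𝕜 := ℝ) (E := V) (F' := ℝ))]
    exact (Subspace.dual_finrank_eq (K := ℝ) (V := V)).symm
  refine ⟨(LinearEquiv.ofInjectiveOfFinrankEq _ hinj hfr).toContinuousLinearEquiv, ?_⟩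
  ext z w
  rfl

lemma gi_g (B : F →L[ℝ] F →L[ℝ] ℝ) (Φ : V →L[ℝ] F)
    (hpos : ∀ z, z ≠ 0 → B (Φ z) (Φ z) ≠ 0) (z : V) : gi B Φ (star B Φ (Φ z)) = z := by
  obtain ⟨e, he⟩ := g_invertible B Φ hpos
  have : star B Φ (Φ z) = e z := by
    rw [← ContinuousLinearMap.comp_apply, ← he]; rfl
  rw [gi, ← he, this, ContinuousLinearMap.inverse_equiv]
  simp

lemma g_gi (B : F →L[ℝ] F →L[ℝ] ℝ) (Φ : V →L[ℝ] F)
    (hpos : ∀ z, z ≠ 0 → B (Φ z) (Φ z) ≠ 0) (l : V →L[ℝ] ℝ) :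
    star B Φ (Φ (gi B Φ l)) = l := by
  obtain ⟨e, he⟩ := g_invertible B Φ hpos
  have : ∀ z, star B Φ (Φ z) = e z := fun z => by
    rw [← ContinuousLinearMap.comp_apply, ← he]; rfl
  rw [this, gi, ← he, ContinuousLinearMap.inverse_equiv]
  simp

variable {Y : Type*} [NormedAddCommGroup Y] [NormedSpace ℝ Y]

omit [FiniteDimensional ℝ V] [FiniteDimensional ℝ F] in
lemma contDiffAt_star (B : F →L[ℝ] F →L[ℝ] ℝ) {Φ : Y → (V →L[ℝ] F)} {y : Y} {n : WithTop ℕ∞}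
    (h : ContDiffAt ℝ n Φ y) : ContDiffAt ℝ n (fun y => star B (Φ y)) y := by
  unfold star
  have h1 : ContDiffAt ℝ n (fun y => (ContinuousLinearMap.compL ℝ V F ℝ).flip (Φ y)) y :=
    (ContinuousLinearMap.contDiff _).contDiffAt.comp y h
  exact h1.clm_comp contDiffAt_const

lemma contDiffAt_gi (B : F →L[ℝ] F →L[ℝ] ℝ) {Φ : Y → (V →L[ℝ] F)} {y : Y} {n : WithTop ℕ∞}
    (h : ContDiffAt ℝ n Φ y) (hpos : ∀ z, z ≠ 0 → B (Φ y z) (Φ y z) ≠ 0) :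
    ContDiffAt ℝ n (fun y => gi B (Φ y)) y := by
  unfold gi
  have h1 : ContDiffAt ℝ n (fun y => (star B (Φ y)).comp (Φ y)) y :=
    (contDiffAt_star B h).clm_comp h
  exact ((g_invertible B (Φ y) hpos).contDiffAt_map_inverse).comp y h1

/-- The local situation in a chart. -/
structure CoreChart (B : F →L[ℝ] F →L[ℝ] ℝ) (U : Set V) (φ : V → F) (X : V → (M →L[ℝ] F))
    (L : F →L[ℝ] M) : Prop where
  isOpen : IsOpen U
  smooth : ContDiffOn ℝ ∞ φ U
  smoothX : ContDiffOn ℝ ∞ X U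
  symm : ∀ x y, B x y = B y x
  orth : ∀ x ∈ U, ∀ a w, B (X x a) (fderiv ℝ φ x w) = 0
  par : ∀ x ∈ U, ∀ u a, ∃ z a', fderiv ℝ X x u a = fderiv ℝ φ x z + X x a'
  norm : ∀ x ∈ U, ∀ a, L (X x a) = a
  pos : ∀ x ∈ U, ∀ z, z ≠ 0 → B (fderiv ℝ φ x z) (fderiv ℝ φ x z) ≠ 0

/-- geodesic acceleration -/
def acc (B : F →L[ℝ] F →L[ℝ] ℝ) (φ : V → F) (x u : V) : V :=
  - gi B (fderiv ℝ φ x) (star B (fderiv ℝ φ x) (fderiv ℝ (fderiv ℝ φ) x u u))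

namespace CoreChart
variable {B : F →L[ℝ] F →L[ℝ] ℝ} {U : Set V} {φ : V → F} {X : V → (M →L[ℝ] F)} {L : F →L[ℝ] M}
  (C : CoreChart B U φ X L)
include C

lemma cφ {x : V} (hx : x ∈ U) : ContDiffAt ℝ ∞ φ x :=
  (C.smooth x hx).contDiffAt (C.isOpen.mem_nhds hx)
lemma cX {x : V} (hx : x ∈ U) : ContDiffAt ℝ ∞ X x :=
  (C.smoothX x hx).contDiffAt (C.isOpen.mem_nhds hx)
lemma cφ1 {x : V} (hx : x ∈ U) : ContDiffAt ℝ ∞ (fderiv ℝ φ) x :=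
  (C.cφ hx).fderiv_right (m := ∞) (by simp)
lemma cX1 {x : V} (hx : x ∈ U) : ContDiffAt ℝ ∞ (fderiv ℝ X) x :=
  (C.cX hx).fderiv_right (m := ∞) (by simp)
lemma cφ2 {x : V} (hx : x ∈ U) : ContDiffAt ℝ ∞ (fderiv ℝ (fderiv ℝ φ)) x :=
  (C.cφ1 hx).fderiv_right (m := ∞) (by simp)
lemma cX2 {x : V} (hx : x ∈ U) : ContDiffAt ℝ ∞ (fderiv ℝ (fderiv ℝ X)) x :=
  (C.cX1 hx).fderiv_right (m := ∞) (by simp)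

lemma dφ {x : V} (hx : x ∈ U) : HasFDerivAt φ (fderiv ℝ φ x) x :=
  ((C.cφ hx).differentiableAt (by simp)).hasFDerivAt
lemma dX {x : V} (hx : x ∈ U) : HasFDerivAt X (fderiv ℝ X x) x :=
  ((C.cX hx).differentiableAt (by simp)).hasFDerivAt
lemma dφ1 {x : V} (hx : x ∈ U) : HasFDerivAt (fderiv ℝ φ) (fderiv ℝ (fderiv ℝ φ) x) x :=
  ((C.cφ1 hx).differentiableAt (by simp)).hasFDerivAt
lemma dX1 {x : V} (hx : x ∈ U) : HasFDerivAt (fderiv ℝ X) (fderiv ℝ (fderiv ℝ X) x) x :=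
  ((C.cX1 hx).differentiableAt (by simp)).hasFDerivAt

lemma symm2φ {x : V} (hx : x ∈ U) (u w : V) :
    fderiv ℝ (fderiv ℝ φ) x u w = fderiv ℝ (fderiv ℝ φ) x w u :=
  (C.cφ hx).isSymmSndFDerivAt (by simp; exact WithTop.coe_le_coe.2 le_top) u w
lemma symm2X {x : V} (hx : x ∈ U) (u w : V) :
    fderiv ℝ (fderiv ℝ X) x u w = fderiv ℝ (fderiv ℝ X) x w u :=
  (C.cX hx).isSymmSndFDerivAt (by simp; exact WithTop.coe_le_coe.2 le_top) u w

lemma d_orth {x : V} (hx : x ∈ U) (a : M) (u w : V) :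
    B (fderiv ℝ X x u a) (fderiv ℝ φ x w) + B (X x a) (fderiv ℝ (fderiv ℝ φ) x u w) = 0 := by
  have h1 : HasFDerivAt (fun y => X y a) ((fderiv ℝ X x).flip a) x := by
    have := (C.dX hx).clm_apply (hasFDerivAt_const a x)
    convert this using 1
    ext; simp
  have h2 : HasFDerivAt (fun y => fderiv ℝ φ y w) ((fderiv ℝ (fderiv ℝ φ) x).flip w) x := by
    have := (C.dφ1 hx).clm_apply (hasFDerivAt_const w x)
    convert this using 1
    ext; simp
  have h3 := (B.hasFDerivAt.comp x h1).clm_apply h2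
  have h4 : (fun y => ((B ∘ fun y => X y a) y) (fderiv ℝ φ y w)) =ᶠ[𝓝 x] fun _ => (0:ℝ) := by
    filter_upwards [C.isOpen.mem_nhds hx] with y hy
    exact C.orth y hy a w
  have h5 := (h3.congr_of_eventuallyEq h4.symm).unique (hasFDerivAt_const (0:ℝ) x)
  have h6 := congrArg (fun l : V →L[ℝ] ℝ => l u) h5
  simp at h6
  linarith

lemma sff_symm {x : V} (hx : x ∈ U) (a : M) (u w : V) :
    B (fderiv ℝ X x u a) (fderiv ℝ φ x w) = B (fderiv ℝ X x w a) (fderiv ℝ φ x u) := by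
  have h1 := C.d_orth hx a u w
  have h2 := C.d_orth hx a w u
  rw [C.symm2φ hx] at h2
  linarith

lemma L_dX {x : V} (hx : x ∈ U) (u : V) (a : M) : L (fderiv ℝ X x u a) = 0 := by
  have h1 : HasFDerivAt (fun y => X y a) ((fderiv ℝ X x).flip a) x := by
    have := (C.dX hx).clm_apply (hasFDerivAt_const a x)
    convert this using 1
    ext; simp
  have h3 := L.hasFDerivAt.comp x h1
  have h4 : (L ∘ fun y => X y a) =ᶠ[𝓝 x] fun _ => a := by
    filter_upwards [C.isOpen.mem_nhds hx] with y hy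
    exact C.norm y hy a
  have h5 := (h3.congr_of_eventuallyEq h4.symm).unique (hasFDerivAt_const a x)
  have h6 := congrArg (fun l : V →L[ℝ] M => l u) h5
  simpa using h6

/-- decomposition of the derivative of the frame -/
lemma decomp {x : V} (hx : x ∈ U) (u : V) (a : M) :
    fderiv ℝ X x u a = fderiv ℝ φ x (gi B (fderiv ℝ φ x) (star B (fderiv ℝ φ x) (fderiv ℝ X x u a)))
      + X x (-(L (fderiv ℝ φ x
        (gi B (fderiv ℝ φ x) (star B (fderiv ℝ φ x) (fderiv ℝ X x u a)))))) := by
  obtain ⟨z, a', h⟩ := C.par x hx u a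
  have h1 : star B (fderiv ℝ φ x) (fderiv ℝ X x u a) = star B (fderiv ℝ φ x) (fderiv ℝ φ x z) := by
    ext w
    simp [star_apply, h, C.orth x hx]
  rw [h1, gi_g B _ (C.pos x hx)]
  have h2 := C.L_dX hx u a
  rw [h, map_add, C.norm x hx] at h2
  rw [h, (neg_eq_of_add_eq_zero_right h2)]

lemma star_accel {x : V} (hx : x ∈ U) (u : V) :
    star B (fderiv ℝ φ x) (fderiv ℝ (fderiv ℝ φ) x u u + fderiv ℝ φ x (acc B φ x u)) = 0 := by
  rw [acc, map_neg, map_add, map_neg, g_gi B _ (C.pos x hx)]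
  simp

lemma dX_eq_zero_iff {x : V} (hx : x ∈ U) (u : V) :
    fderiv ℝ X x u = 0 ↔ ∀ a w, B (fderiv ℝ X x u a) (fderiv ℝ φ x w) = 0 := by
  constructor
  · intro h a w; simp [h]
  · intro h
    ext1 a
    have h1 : star B (fderiv ℝ φ x) (fderiv ℝ X x u a) = 0 := by
      ext w; simp [star_apply, h]
    rw [C.decomp hx, h1]; simp

end CoreChart
end core
end GNull

end

section
open Set Filter Topology
open scoped ContDiff
set_option maxSynthPendingDepth 6
set_option linter.unusedSectionVars false

namespace GNull

/-- kernel dimension -/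
abbrev kd {V Z : Type*} [NormedAddCommGroup V] [NormedSpace ℝ V]
    [NormedAddCommGroup Z] [NormedSpace ℝ Z] (A : V →L[ℝ] Z) : ℕ :=
  Module.finrank ℝ (LinearMap.ker (A : V →ₗ[ℝ] Z))

section core3
variable {V F M : Type*} [NormedAddCommGroup V] [NormedSpace ℝ V] [FiniteDimensional ℝ V]
  [NormedAddCommGroup F] [NormedSpace ℝ F] [FiniteDimensional ℝ F]
  [NormedAddCommGroup M] [NormedSpace ℝ M] [FiniteDimensional ℝ M]

namespace CoreChart
variable {B : F →L[ℝ] F →L[ℝ] ℝ} {U : Set V} {φ : V → F} {X : V → (M →L[ℝ] F)} {L : F →L[ℝ] M}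
  (C : CoreChart B U φ X L)
include C

lemma ker_second {x0 : V} (hx0 : x0 ∈ U) (S : V → ((M →L[ℝ] F) →L[ℝ] V))
    (hS1 : ContDiffAt ℝ 1 S x0)
    (hS : ∀ᶠ y in 𝓝 x0, ∀ u, fderiv ℝ X y (u - S y (fderiv ℝ X y u)) = 0) :
    ∀ᶠ y in 𝓝 x0, ∀ T, fderiv ℝ X y T = 0 → ∀ w a,
      B (fderiv ℝ φ y T) (fderiv ℝ (fderiv ℝ X) y w T a) = 0 := by
  filter_upwards [eventually_eventually_nhds.2 hS, hS1.eventually (by simp),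
    C.isOpen.mem_nhds hx0] with y hy hSy hyU T hT w a
  have hd : HasFDerivAt S (fderiv ℝ S y) y := (hSy.differentiableAt (by simp)).hasFDerivAt
  have h1 : HasFDerivAt (fun y => fderiv ℝ X y T) ((fderiv ℝ (fderiv ℝ X) y).flip T) y := by
    have := (C.dX1 hyU).clm_apply (hasFDerivAt_const T y)
    simpa using this
  have h2 := (hd.clm_apply h1).const_sub T
  have h3 := (C.dX1 hyU).clm_apply h2
  have h4 := (h3.congr_of_eventuallyEq
    (f₁ := fun _ => (0 : M →L[ℝ] F)) (by
      filter_upwards [hy] with z hz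
      exact (hz T).symm)).unique (hasFDerivAt_const _ y)
  have h5 := congrArg (fun l : V →L[ℝ] M →L[ℝ] F => l w a) h4
  simp only [hT, map_zero, sub_zero, _root_.add_apply, ContinuousLinearMap.comp_apply,
    ContinuousLinearMap.flip_apply, _root_.zero_apply, 
    _root_.neg_apply, map_neg] at h5
  have h6 : fderiv ℝ (fderiv ℝ X) y w T a = fderiv ℝ X y (S y (fderiv ℝ (fderiv ℝ X) y w T)) a := by
    rw [add_zero] at h5
    rw [← sub_eq_zero, ← h5]
    abel
  rw [h6, C.symm, C.sff_symm hyU, hT]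
  simp

lemma eta_bound {x u : V} (hx : x ∈ U) (S : (M →L[ℝ] F) →L[ℝ] V)
    (hS : fderiv ℝ X x (u - S (fderiv ℝ X x u)) = 0)
    (hker : ∀ T, fderiv ℝ X x T = 0 → ∀ w a,
      B (fderiv ℝ φ x T) (fderiv ℝ (fderiv ℝ X) x w T a) = 0)
    (c e : ℝ) (hc : 0 ≤ c) (he0 : 0 ≤ e)
    (hB : ‖B‖ ≤ c) (hL : ‖L‖ ≤ c) (hΦ : ‖fderiv ℝ φ x‖ ≤ c) (hgi : ‖gi B (fderiv ℝ φ x)‖ ≤ c)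
    (hst : ‖star B (fderiv ℝ φ x)‖ ≤ c) (hX : ‖X x‖ ≤ c) (hΘ : ‖fderiv ℝ X x‖ ≤ c)
    (hD : ‖fderiv ℝ (fderiv ℝ X) x‖ ≤ c) (hSn : ‖S‖ ≤ c) (hu : ‖u‖ ≤ c)
    (he : ∀ w a, ‖B (fderiv ℝ φ x u) (fderiv ℝ X x w a)‖ ≤ e * ‖w‖ * ‖a‖) (w : V) (a : M) :
    ‖B (fderiv ℝ (fderiv ℝ φ) x u u + fderiv ℝ φ x (acc B φ x u)) (fderiv ℝ X x w a) +
      B (fderiv ℝ φ x u) (fderiv ℝ (fderiv ℝ X) x u w a)‖ ≤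
      ((c*c*c)*c*(c*((c*c)+c*(c*(c*c)))) + (c*c)*(c*((c*c)+c*(c*(c*c))))*(c*(c+c*(c*c)))
        + c * (c*(c*(c*(c*c))))) * e * ‖w‖ * ‖a‖ := by
  set Φ := fderiv ℝ φ x with hΦdef
  set Θ := fderiv ℝ X x with hΘdef
  set D := fderiv ℝ (fderiv ℝ X) x with hDdef
  set acl := fderiv ℝ (fderiv ℝ φ) x u u + Φ (acc B φ x u) with hacl
  -- bound on Θ u
  have h1 : ‖Θ u‖ ≤ ((c*c)+c*(c*(c*c))) * e := by
    refine ContinuousLinearMap.opNorm_le_bound _ (by positivity) fun b => ?_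
    have hs : ‖star B Φ (Θ u b)‖ ≤ e * ‖b‖ := by
      refine ContinuousLinearMap.opNorm_le_bound _ (by positivity) fun z => ?_
      rw [star_apply, C.sff_symm hx, C.symm]
      refine (he z b).trans (le_of_eq (by ring))
    have hg : ‖Φ (gi B Φ (star B Φ (Θ u b)))‖ ≤ c * (c * (e * ‖b‖)) :=
      ContinuousLinearMap.le_of_opNorm_le_of_le _ hΦ
        (ContinuousLinearMap.le_of_opNorm_le_of_le _ hgi hs)
    have hg2 : ‖X x (-(L (Φ (gi B Φ (star B Φ (Θ u b))))))‖ ≤ c * (c * (c * (c * (e * ‖b‖)))) := by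
      refine ContinuousLinearMap.le_of_opNorm_le_of_le _ hX ?_
      rw [norm_neg]
      exact ContinuousLinearMap.le_of_opNorm_le_of_le _ hL hg
    rw [hΘdef, C.decomp hx u b]
    refine (norm_add_le _ _).trans ((add_le_add hg hg2).trans (le_of_eq (by ring)))
  set κ := S (Θ u) with hκ
  have hκn : ‖κ‖ ≤ c * (((c*c)+c*(c*(c*c))) * e) :=
    ContinuousLinearMap.le_of_opNorm_le_of_le _ hSn h1
  have hΘu : ‖Θ u‖ ≤ c * c := ContinuousLinearMap.le_of_opNorm_le_of_le _ hΘ hu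
  have hPn : ‖u - κ‖ ≤ c + c * (c * c) :=
    (norm_sub_le _ _).trans (add_le_add hu (ContinuousLinearMap.le_of_opNorm_le_of_le _ hSn hΘu))
  have hDD : ∀ z : V, ∀ r : ℝ, ‖z‖ ≤ r → ‖D w z a‖ ≤ c * ‖w‖ * r * ‖a‖ := fun z r hz =>
    ContinuousLinearMap.le_of_opNorm_le _ (ContinuousLinearMap.le_of_opNorm_le_of_le _
      (ContinuousLinearMap.le_of_opNorm_le _ hD w) hz) a
  have hBB : ∀ (f g : F) (r s : ℝ), ‖f‖ ≤ r → ‖g‖ ≤ s → ‖B f g‖ ≤ c * r * s := fun f g r s hf hg =>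
    ContinuousLinearMap.le_of_opNorm_le_of_le _
      (ContinuousLinearMap.le_of_opNorm_le_of_le _ hB hf) hg
  have hΦu : ‖Φ u‖ ≤ c * c := ContinuousLinearMap.le_of_opNorm_le_of_le _ hΦ hu
  have hΦκ : ‖Φ κ‖ ≤ c * (c * (((c*c)+c*(c*(c*c))) * e)) :=
    ContinuousLinearMap.le_of_opNorm_le_of_le _ hΦ hκn
  -- first term
  have t1 : B (Φ u) (D u w a) = B (Φ u) (D w κ a) + B (Φ κ) (D w (u - κ) a) := by
    have e1 : D u w = D w κ + D w (u - κ) := by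
      rw [hDdef, C.symm2X hx u w, ← map_add]; congr 1; abel
    have e2 : B (Φ u) (D w (u - κ) a) = B (Φ κ) (D w (u - κ) a) := by
      have := hker (u - κ) hS w a
      rw [map_sub, map_sub, _root_.sub_apply, sub_eq_zero] at this
      exact this
    rw [e1, _root_.add_apply, map_add, e2]
  -- second term
  set a' := -(L (Φ (gi B Φ (star B Φ (Θ w a))))) with ha'
  have ha'n : ‖a'‖ ≤ c*(c*(c*(c*(c*‖w‖*‖a‖)))) := by
    rw [ha', norm_neg]
    exact ContinuousLinearMap.le_of_opNorm_le_of_le _ hL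
      (ContinuousLinearMap.le_of_opNorm_le_of_le _ hΦ
      (ContinuousLinearMap.le_of_opNorm_le_of_le _ hgi
      (ContinuousLinearMap.le_of_opNorm_le_of_le _ hst
      (ContinuousLinearMap.le_of_opNorm_le _ (ContinuousLinearMap.le_of_opNorm_le _ hΘ w) a))))
  have t2 : B acl (Θ w a) = - B (Φ u) (Θ u a') := by
    have hz : ∀ z, B acl (Φ z) = 0 := fun z => by
      have := congrArg (fun l : V →L[ℝ] ℝ => l z) (C.star_accel hx u)
      exact this
    rw [hΘdef, C.decomp hx w a, map_add, hz, zero_add, C.symm acl]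
    have := C.d_orth hx a' u u
    rw [hacl, map_add, C.orth x hx, add_zero, C.symm (Φ u)]
    linarith
  have b2 : ‖B acl (Θ w a)‖ ≤ e * c * (c*(c*(c*(c*(c*‖w‖*‖a‖))))) := by
    rw [t2, norm_neg]
    refine (he u a').trans ?_
    gcongr
  have b1 := hBB _ _ _ _ hΦu (hDD κ _ hκn)
  have b3 := hBB _ _ _ _ hΦκ (hDD (u - κ) _ hPn)
  rw [t1]
  refine (norm_add_le _ _).trans ((add_le_add b2 ((norm_add_le _ _).trans (add_le_add b1 b3))).trans
    (le_of_eq (by ring)))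

lemma cont_acc {x u : V} (hx : x ∈ U) :
    ContDiffAt ℝ ∞ (fun z : V × V => acc B φ z.1 z.2) (x, u) := by
  unfold acc
  have h1 : ContDiffAt ℝ ∞ (fun z : V × V => fderiv ℝ φ z.1) (x, u) :=
    (C.cφ1 hx).comp (x, u) contDiffAt_fst
  have h2 : ContDiffAt ℝ ∞ (fun z : V × V => fderiv ℝ (fderiv ℝ φ) z.1) (x, u) :=
    (C.cφ2 hx).comp (x, u) contDiffAt_fst
  exact ((contDiffAt_gi B h1 (C.pos x hx)).clm_apply ((contDiffAt_star B h1).clm_apply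
    ((h2.clm_apply contDiffAt_snd).clm_apply contDiffAt_snd))).neg

omit C in
lemma ev_bd {E : Type*} [NormedAddCommGroup E] {f : ℝ → E} {t0 c : ℝ} (h : ContinuousAt f t0)
    (hc : ‖f t0‖ + 1 ≤ c) : ∀ᶠ t in 𝓝 t0, ‖f t‖ ≤ c := by
  have h2 : ∀ᶠ t in 𝓝 t0, ‖f t‖ < ‖f t0‖ + 1 := h.norm.eventually_lt_const (by linarith)
  filter_upwards [h2] with t ht
  linarith

lemma core_forward {x u : ℝ → V} {t0 : ℝ} (hx : x t0 ∈ U)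
    (hreg : ∀ᶠ y in 𝓝 (x t0), kd (fderiv ℝ X (x t0)) ≤
      kd (fderiv ℝ X y))
    (hode : ∀ᶠ t in 𝓝 t0, HasDerivAt x (u t) t ∧ HasDerivAt u (acc B φ (x t) (u t)) t)
    (h0 : fderiv ℝ X (x t0) (u t0) = 0) :
    ∀ᶠ t in 𝓝[≥] t0, fderiv ℝ X (x t) (u t) = 0 := by
  obtain ⟨S, hS1, hS⟩ := constRank (fderiv ℝ X) (x t0) ((C.cX1 hx).of_le (by simp)) hreg
  have hker := C.ker_second hx S hS1 hS
  have hxc : ContinuousAt x t0 := hode.self_of_nhds.1.continuousAt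
  have huc : ContinuousAt u t0 := hode.self_of_nhds.2.continuousAt
  have cΦ : ContinuousAt (fun t => fderiv ℝ φ (x t)) t0 :=
    (C.cφ1 hx).continuousAt.comp (f := x) hxc
  have cgi : ContinuousAt (fun t => gi B (fderiv ℝ φ (x t))) t0 :=
    (contDiffAt_gi B (C.cφ1 hx) (C.pos _ hx)).continuousAt.comp (f := x) hxc
  have cst : ContinuousAt (fun t => star B (fderiv ℝ φ (x t))) t0 :=
    (contDiffAt_star B (C.cφ1 hx)).continuousAt.comp (f := x) hxc
  have cX : ContinuousAt (fun t => X (x t)) t0 := (C.cX hx).continuousAt.comp (f := x) hxc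
  have cΘ : ContinuousAt (fun t => fderiv ℝ X (x t)) t0 :=
    (C.cX1 hx).continuousAt.comp (f := x) hxc
  have cD : ContinuousAt (fun t => fderiv ℝ (fderiv ℝ X) (x t)) t0 :=
    (C.cX2 hx).continuousAt.comp (f := x) hxc
  have cS : ContinuousAt (fun t => S (x t)) t0 := hS1.continuousAt.comp (f := x) hxc
  obtain ⟨c, hc⟩ : ∃ c : ℝ, 0 ≤ c ∧ ‖B‖ ≤ c ∧ ‖L‖ ≤ c ∧ ‖fderiv ℝ φ (x t0)‖ + 1 ≤ c ∧
      ‖gi B (fderiv ℝ φ (x t0))‖ + 1 ≤ c ∧ ‖star B (fderiv ℝ φ (x t0))‖ + 1 ≤ c ∧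
      ‖X (x t0)‖ + 1 ≤ c ∧ ‖fderiv ℝ X (x t0)‖ + 1 ≤ c ∧
      ‖fderiv ℝ (fderiv ℝ X) (x t0)‖ + 1 ≤ c ∧ ‖S (x t0)‖ + 1 ≤ c ∧ ‖u t0‖ + 1 ≤ c := by
    have H : ∀ᶠ c : ℝ in atTop, 0 ≤ c ∧ ‖B‖ ≤ c ∧ ‖L‖ ≤ c ∧ ‖fderiv ℝ φ (x t0)‖ + 1 ≤ c ∧
      ‖gi B (fderiv ℝ φ (x t0))‖ + 1 ≤ c ∧ ‖star B (fderiv ℝ φ (x t0))‖ + 1 ≤ c ∧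
      ‖X (x t0)‖ + 1 ≤ c ∧ ‖fderiv ℝ X (x t0)‖ + 1 ≤ c ∧
      ‖fderiv ℝ (fderiv ℝ X) (x t0)‖ + 1 ≤ c ∧ ‖S (x t0)‖ + 1 ≤ c ∧ ‖u t0‖ + 1 ≤ c := by
      simp only [eventually_and]
      refine ⟨?_, ?_, ?_, ?_, ?_, ?_, ?_, ?_, ?_, ?_, ?_⟩ <;> exact eventually_ge_atTop _
    exact H.exists
  obtain ⟨hc0, hcB, hcL, hc1, hc2, hc3, hc4, hc5, hc6, hc7, hc8⟩ := hc
  set η : ℝ → (V →L[ℝ] M →L[ℝ] ℝ) := fun t =>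
    ((ContinuousLinearMap.compL ℝ M F ℝ) (B (fderiv ℝ φ (x t) (u t)))).comp (fderiv ℝ X (x t))
    with hη
  set η' : ℝ → (V →L[ℝ] M →L[ℝ] ℝ) := fun t =>
    ((ContinuousLinearMap.compL ℝ M F ℝ) (B (fderiv ℝ (fderiv ℝ φ) (x t) (u t) (u t)
      + fderiv ℝ φ (x t) (acc B φ (x t) (u t))))).comp (fderiv ℝ X (x t)) +
    ((ContinuousLinearMap.compL ℝ M F ℝ) (B (fderiv ℝ φ (x t) (u t)))).comp
      (fderiv ℝ (fderiv ℝ X) (x t) (u t)) with hη'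
  have hxU : ∀ᶠ t in 𝓝 t0, x t ∈ U := hxc (C.isOpen.mem_nhds hx)
  have hall : ∀ᶠ t in 𝓝 t0, HasDerivAt η (η' t) t ∧ ∃ K : ℝ, K = (c*c*c)*c*(c*((c*c)+c*(c*(c*c)))) + (c*c)*(c*((c*c)+c*(c*(c*c))))*(c*(c+c*(c*c)))
        + c * (c*(c*(c*(c*c)))) ∧ ‖η' t‖ ≤ K * ‖η t‖ ∧ (η t = 0 → fderiv ℝ X (x t) (u t) = 0) := by
    filter_upwards [hode, hxU, hxc.eventually hker, hxc.eventually hS, ev_bd cΦ hc1, ev_bd cgi hc2,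
      ev_bd cst hc3, ev_bd cX hc4, ev_bd cΘ hc5, ev_bd cD hc6, ev_bd cS hc7, ev_bd huc hc8]
      with t ⟨hx1, hu1⟩ hxt hk hs h1 h2 h3 h4 h5 h6 h7 h8
    refine ⟨?_, _, rfl, ?_, ?_⟩
    · have d1 : HasDerivAt (fun t => fderiv ℝ φ (x t)) (fderiv ℝ (fderiv ℝ φ) (x t) (u t)) t :=
        (C.dφ1 hxt).comp_hasDerivAt t hx1
      have d2 := d1.clm_apply hu1
      have d3 : HasDerivAt (fun t => (ContinuousLinearMap.compL ℝ M F ℝ)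
          (B (fderiv ℝ φ (x t) (u t)))) _ t :=
        (((ContinuousLinearMap.compL ℝ M F ℝ).comp B).hasFDerivAt).comp_hasDerivAt t d2
      have d4 : HasDerivAt (fun t => fderiv ℝ X (x t)) (fderiv ℝ (fderiv ℝ X) (x t) (u t)) t :=
        (C.dX1 hxt).comp_hasDerivAt t hx1
      exact d3.clm_comp d4
    · refine ContinuousLinearMap.opNorm_le_bound _ (by positivity) fun w => ?_
      refine ContinuousLinearMap.opNorm_le_bound _ (by positivity) fun a => ?_
      exact C.eta_bound hxt (S (x t)) (hs (u t)) hk c ‖η t‖ hc0 (norm_nonneg _) hcB hcL h1 h2 h3 h4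
        h5 h6 h7 h8 (fun w a => (η t).le_opNorm₂ w a) w a
    · intro h
      rw [C.dX_eq_zero_iff hxt]
      intro a w
      rw [C.sff_symm hxt, C.symm]
      exact congrArg (fun l : V →L[ℝ] M →L[ℝ] ℝ => l w a) h
  obtain ⟨ε, hε, hball⟩ := Metric.eventually_nhds_iff.1 hall
  have hη0 : η t0 = 0 := by
    ext w a
    change B (fderiv ℝ φ (x t0) (u t0)) (fderiv ℝ X (x t0) w a) = 0
    rw [C.symm, C.sff_symm hx, h0]
    simp
  have hz : ∀ t ∈ Icc t0 (t0 + ε / 2), η t = 0 := by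
    have hin : ∀ t ∈ Icc t0 (t0 + ε / 2), dist t t0 < ε := by
      intro t ht
      rw [Real.dist_eq, abs_of_nonneg (by linarith [ht.1])]
      linarith [ht.2]
    refine eq_zero_of_abs_deriv_le_mul_abs_self_of_eq_zero_right (f' := η')
      (K := (c*c*c)*c*(c*((c*c)+c*(c*(c*c)))) + (c*c)*(c*((c*c)+c*(c*(c*c))))*(c*(c+c*(c*c)))
        + c * (c*(c*(c*(c*c))))) ?_ ?_ hη0 ?_
    · exact fun t ht => (hball (hin t ht)).1.continuousAt.continuousWithinAt
    · exact fun t ht => (hball (hin t (Ico_subset_Icc_self ht))).1.hasDerivWithinAt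
    · intro t ht
      obtain ⟨K, rfl, h, _⟩ := (hball (hin t (Ico_subset_Icc_self ht))).2
      exact h
  have : Icc t0 (t0 + ε / 2) ∈ 𝓝[≥] t0 := Icc_mem_nhdsGE (by linarith)
  filter_upwards [this, nhdsWithin_le_nhds hall] with t ht hat
  obtain ⟨_, K, _, _, h⟩ := hat
  exact h (hz t ht)

end CoreChart
end core3
end GNull

end

section
open Set Filter Topology
open scoped ContDiff
set_option maxSynthPendingDepth 6
set_option linter.unusedSectionVars false

namespace GNull

section core4
variable {V F M : Type*} [NormedAddCommGroup V] [NormedSpace ℝ V] [FiniteDimensional ℝ V]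
  [NormedAddCommGroup F] [NormedSpace ℝ F] [FiniteDimensional ℝ F]
  [NormedAddCommGroup M] [NormedSpace ℝ M] [FiniteDimensional ℝ M]

/-- the geodesic equation at time `t` -/
def Ode (B : F →L[ℝ] F →L[ℝ] ℝ) (φ : V → F) (x u : ℝ → V) (t : ℝ) : Prop :=
  HasDerivAt x (u t) t ∧ HasDerivAt u (acc B φ (x t) (u t)) t

namespace CoreChart
variable {B : F →L[ℝ] F →L[ℝ] ℝ} {U : Set V} {φ : V → F} {X : V → (M →L[ℝ] F)} {L : F →L[ℝ] M}
  (C : CoreChart B U φ X L)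
include C

lemma const {x u : ℝ → V} {a b : ℝ} {r0 : ℕ}
    (hU : ∀ t ∈ Icc a b, x t ∈ U) (hode : ∀ t ∈ Icc a b, ∀ᶠ s in 𝓝 t, Ode B φ x u s)
    (hmin : ∀ y ∈ U, r0 ≤ kd (fderiv ℝ X y)) (hr : ∀ t ∈ Icc a b, kd (fderiv ℝ X (x t)) ≤ r0)
    (h0 : fderiv ℝ X (x a) (u a) = 0) (hab : a ≤ b) : X (x b) = X (x a) := by
  have hcont : ContinuousOn (fun t => fderiv ℝ X (x t) (u t)) (Icc a b) := by
    intro t ht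
    have ho := (hode t ht).self_of_nhds
    have h1 : ContinuousAt (fun t => fderiv ℝ X (x t)) t :=
      (C.cX1 (hU t ht)).continuousAt.comp (f := x) ho.1.continuousAt
    exact (h1.clm_apply ho.2.continuousAt).continuousWithinAt
  have hsub : Icc a b ⊆ {t | fderiv ℝ X (x t) (u t) = 0} := by
    refine IsClosed.Icc_subset_of_forall_mem_nhdsWithin ?_ h0 ?_
    · have := hcont.preimage_isClosed_of_isClosed isClosed_Icc (isClosed_singleton (x := 0))
      rwa [inter_comm] at this
    · intro t ht
      have hI := Ico_subset_Icc_self ht.2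
      have := C.core_forward (hU t hI) (by
        filter_upwards [C.isOpen.mem_nhds (hU t hI)] with y hy
        exact (hr t hI).trans (hmin y hy)) (hode t hI) ht.1
      exact nhdsWithin_mono _ Ioi_subset_Ici_self this
  refine constant_of_has_deriv_right_zero (f := fun t => X (x t)) ?_ ?_ b (right_mem_Icc.2 hab)
  · intro t ht
    exact ((C.cX (hU t ht)).continuousAt.comp (f := x)
      (hode t ht).self_of_nhds.1.continuousAt).continuousWithinAt
  · intro t ht
    have hI := Ico_subset_Icc_self ht
    have := (C.dX (hU t hI)).comp_hasDerivAt t (hode t hI).self_of_nhds.1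
    rw [hsub hI] at this
    exact this.hasDerivWithinAt

lemma variation {x u : ℝ → V} {T ε r : ℝ} {K : NNReal} {r0 : ℕ} {z0 : V × V} {N : Set (V × V)}
    (hT : T < ε)
    (hNU : ∀ z ∈ N, z.1 ∈ U)
    (hLip : LipschitzOnWith K (fun z : V × V => (z.2, acc B φ z.1 z.2)) N)
    (hflow : ∀ z ∈ Metric.closedBall z0 r, ∃ α : ℝ → V × V, α 0 = z ∧
      ∀ τ ∈ Ioo (-ε) ε, HasDerivAt α ((α τ).2, acc B φ (α τ).1 (α τ).2) τ ∧ α τ ∈ N)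
    (hz : (x 0, u 0) ∈ Metric.ball z0 r)
    (hode : ∀ t ∈ Icc 0 T, ∀ᶠ s in 𝓝 t, Ode B φ x u s)
    (hN : ∀ t ∈ Icc 0 T, (x t, u t) ∈ N)
    (hmin : ∀ y ∈ U, r0 ≤ kd (fderiv ℝ X y)) (hr : ∀ t ∈ Ico 0 T, kd (fderiv ℝ X (x t)) ≤ r0)
    (h0 : fderiv ℝ X (x 0) (u 0) = 0) (hT0 : 0 < T) (w : V) :
    ∃ K0 : ℝ, 0 ≤ K0 ∧ ∀ t ∈ Ioo 0 T, ∀ e > 0, ∃ J : V, ‖J‖ ≤ K0 ∧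
      ‖fderiv ℝ X (x t) J - fderiv ℝ X (x 0) w‖ ≤ e := by
  have h0T : (0:ℝ) ∈ Icc 0 T := ⟨le_rfl, hT0.le⟩
  have hU : ∀ t ∈ Icc 0 T, x t ∈ U := fun t ht => hNU _ (hN t ht)
  have hx0 := hU 0 h0T
  obtain ⟨S, hS1, hS⟩ := constRank (fderiv ℝ X) (x 0) ((C.cX1 hx0).of_le (by simp)) (by
    filter_upwards [C.isOpen.mem_nhds hx0] with y hy
    exact (hr 0 ⟨le_rfl, hT0⟩).trans (hmin y hy))
  set zin : ℝ → V × V := fun s =>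
    (x 0 + s • w, u 0 - S (x 0 + s • w) (fderiv ℝ X (x 0 + s • w) (u 0))) with hzin
  have hlin : HasDerivAt (fun s : ℝ => x 0 + s • w) w 0 := by
    simpa using ((hasDerivAt_id (0:ℝ)).smul_const w).const_add (x 0)
  have hl0 : x 0 + (0:ℝ) • w = x 0 := by simp
  have hzin0 : zin 0 = (x 0, u 0) := by simp [hzin, h0]
  have hzd : DifferentiableAt ℝ zin 0 := by
    have e1 : DifferentiableAt ℝ S (x 0 + (0:ℝ) • w) := by
      rw [hl0]; exact hS1.differentiableAt (by simp)
    have e2 : DifferentiableAt ℝ (fderiv ℝ X) (x 0 + (0:ℝ) • w) := by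
      rw [hl0]; exact (C.dX1 hx0).differentiableAt
    have e3 : DifferentiableAt ℝ (fun s : ℝ => S (x 0 + s • w)) 0 :=
      DifferentiableAt.comp (0:ℝ) e1 hlin.differentiableAt
    have e4 : DifferentiableAt ℝ (fun s : ℝ => fderiv ℝ X (x 0 + s • w)) 0 :=
      DifferentiableAt.comp (0:ℝ) e2 hlin.differentiableAt
    exact hlin.differentiableAt.prodMk ((differentiableAt_const _).sub
      (e3.clm_apply (e4.clm_apply (differentiableAt_const _))))
  obtain ⟨c, hc0, hc⟩ := hzd.isBigO_sub.exists_pos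
  have hcb := hc.bound
  have hball : ∀ᶠ s in 𝓝 (0:ℝ), zin s ∈ Metric.closedBall z0 r := by
    have : Metric.ball z0 r ∈ 𝓝 (zin 0) := by rw [hzin0]; exact Metric.isOpen_ball.mem_nhds hz
    filter_upwards [hzd.continuousAt this] with s hs using Metric.ball_subset_closedBall hs
  have hlc : Tendsto (fun s : ℝ => x 0 + s • w) (𝓝 0) (𝓝 (x 0)) := by
    have := hlin.continuousAt.tendsto
    rwa [hl0] at this
  set K0 := c * Real.exp (K * T) with hK0
  have hK0n : 0 ≤ K0 := by positivity
  refine ⟨K0, hK0n, fun t ht e he => ?_⟩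
  have htI : t ∈ Icc 0 T := ⟨ht.1.le, ht.2.le⟩
  have hsubI : Icc 0 t ⊆ Icc 0 T := Icc_subset_Icc le_rfl ht.2.le
  have hconst0 : X (x t) = X (x 0) := C.const (fun s hs => hU s (hsubI hs))
    (fun s hs => hode s (hsubI hs)) hmin (fun s hs => hr s ⟨hs.1, hs.2.trans_lt ht.2⟩) h0 ht.1.le
  -- regular set
  have hregopen : IsOpen {y | y ∈ U ∧ kd (fderiv ℝ X y) ≤ r0} := by
    rw [isOpen_iff_mem_nhds]
    intro y hy
    filter_upwards [C.isOpen.mem_nhds hy.1,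
      finrank_ker_eventually_le (fderiv ℝ X) y ((C.cX1 hy.1).of_le (by simp))] with y' h1 h2
    exact ⟨h1, h2.trans hy.2⟩
  have hxcont : ContinuousOn x (Icc 0 t) := fun s hs =>
    (hode s (hsubI hs)).self_of_nhds.1.continuousAt.continuousWithinAt
  obtain ⟨δ, hδ, hthick⟩ := (isCompact_Icc.image_of_continuousOn hxcont).exists_thickening_subset_open
    hregopen (by
      rintro _ ⟨s, hs, rfl⟩
      exact ⟨hU s (hsubI hs), hr s ⟨hs.1, hs.2.trans_lt ht.2⟩⟩)
  set c1 := e / (K0 + 1) with hc1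
  have hc1p : 0 < c1 := by positivity
  -- first order expansions
  have ex1 : ∀ᶠ y in 𝓝 (x t), ‖X y - X (x t) - fderiv ℝ X (x t) (y - x t)‖ ≤ c1 * ‖y - x t‖ :=
    (C.dX (hU t htI)).isLittleO.def hc1p
  obtain ⟨δ1, hδ1, ex1⟩ := Metric.eventually_nhds_iff.1 ex1
  have ex2 : ∀ᶠ s in 𝓝 (0:ℝ), ‖X (x 0 + s • w) - X (x 0) - s • fderiv ℝ X (x 0) w‖ ≤ c1 * ‖s‖ := by
    have hd : HasDerivAt (fun s : ℝ => X (x 0 + s • w)) (fderiv ℝ X (x 0) w) 0 := by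
      refine HasFDerivAt.comp_hasDerivAt (0:ℝ) (l := X) ?_ hlin
      rw [hl0]; exact C.dX hx0
    have := (hasDerivAt_iff_isLittleO.1 hd).def hc1p
    simpa using this
  have small : ∀ᶠ s in 𝓝 (0:ℝ), K0 * ‖s‖ < min δ δ1 := by
    have : Tendsto (fun s : ℝ => K0 * ‖s‖) (𝓝 0) (𝓝 (K0 * ‖(0:ℝ)‖)) :=
      (continuous_const.mul continuous_norm).tendsto _
    refine this.eventually_lt_const ?_
    simp [hδ, hδ1]
  obtain ⟨s, ⟨hsb, hcb', hSs, hex2, hsm⟩, hs0⟩ := ((((hball.and (hcb.and ((hlc.eventually hS).and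
    (ex2.and small)))).filter_mono (nhdsWithin_le_nhds (s := {0}ᶜ)))).and
    self_mem_nhdsWithin).exists
  have hs0' : s ≠ 0 := hs0
  obtain ⟨α, hα0, hα⟩ := hflow _ hsb
  have hIoo : ∀ τ ∈ Icc 0 T, τ ∈ Ioo (-ε) ε := fun τ hτ =>
    ⟨by linarith [hτ.1, hT0], by linarith [hτ.2]⟩
  have hdist : ∀ τ ∈ Icc 0 T, dist (α τ) (x τ, u τ) ≤ (c * ‖s‖) * Real.exp (K * (τ - 0)) := by
    refine dist_le_of_trajectories_ODE_of_mem (v := fun _ z => (z.2, acc B φ z.1 z.2))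
      (s := fun _ => N) (fun _ _ => hLip) ?_ ?_ ?_ ?_ ?_ ?_ ?_
    · exact fun τ hτ => (hα τ (hIoo τ hτ)).1.continuousAt.continuousWithinAt
    · exact fun τ hτ => (hα τ (hIoo τ (Ico_subset_Icc_self hτ))).1.hasDerivWithinAt
    · exact fun τ hτ => (hα τ (hIoo τ (Ico_subset_Icc_self hτ))).2
    · intro τ hτ
      have := (hode τ hτ).self_of_nhds
      exact (this.1.continuousAt.prodMk this.2.continuousAt).continuousWithinAt
    · intro τ hτ
      have := (hode τ (Ico_subset_Icc_self hτ)).self_of_nhds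
      exact (this.1.prodMk this.2).hasDerivWithinAt
    · exact fun τ hτ => hN τ (Ico_subset_Icc_self hτ)
    · rw [hα0, dist_eq_norm, ← hzin0]
      simpa using hcb'
  have hdist1 : ∀ τ ∈ Icc 0 T, ‖(α τ).1 - x τ‖ ≤ K0 * ‖s‖ := by
    intro τ hτ
    have h1 : dist (α τ).1 (x τ) ≤ dist (α τ) (x τ, u τ) := by
      rw [Prod.dist_eq]; exact le_max_left _ _
    rw [← dist_eq_norm]
    refine h1.trans ((hdist τ hτ).trans ?_)
    rw [hK0, sub_zero]
    have : Real.exp (K * τ) ≤ Real.exp (K * T) :=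
      Real.exp_le_exp.2 (mul_le_mul_of_nonneg_left hτ.2 K.2)
    nlinarith [mul_le_mul_of_nonneg_left this (mul_nonneg hc0.le (norm_nonneg s))]
  have hconst1 : X (α t).1 = X (x 0 + s • w) := by
    have hαreg : ∀ τ ∈ Icc 0 t, (α τ).1 ∈ {y | y ∈ U ∧ kd (fderiv ℝ X y) ≤ r0} := by
      intro τ hτ
      apply hthick
      rw [Metric.mem_thickening_iff]
      refine ⟨x τ, ⟨τ, hτ, rfl⟩, ?_⟩
      rw [dist_eq_norm]
      exact (hdist1 τ (hsubI hτ)).trans_lt (hsm.trans_le (min_le_left _ _))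
    have := C.const (x := fun τ => (α τ).1) (u := fun τ => (α τ).2) (a := 0) (b := t) (r0 := r0)
      (fun τ hτ => (hαreg τ hτ).1) ?_ hmin (fun τ hτ => (hαreg τ hτ).2) ?_ ht.1.le
    · simpa [hα0] using this
    · intro τ hτ
      filter_upwards [isOpen_Ioo.mem_nhds (hIoo τ (hsubI hτ))] with σ hσ
      have := (hα σ hσ).1
      exact ⟨(ContinuousLinearMap.fst ℝ V V).hasFDerivAt.comp_hasDerivAt σ this,
        (ContinuousLinearMap.snd ℝ V V).hasFDerivAt.comp_hasDerivAt σ this⟩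
    · simp only [hα0, hzin]
      exact hSs (u 0)
  have hy := ex1 (y := (α t).1) (by
    rw [dist_eq_norm]
    exact (hdist1 t htI).trans_lt (hsm.trans_le (min_le_right _ _)))
  refine ⟨s⁻¹ • ((α t).1 - x t), ?_, ?_⟩
  · rw [norm_smul, norm_inv]
    have := hdist1 t htI
    have hsn : 0 < ‖s‖ := norm_pos_iff.2 hs0'
    rw [inv_mul_le_iff₀ hsn]
    linarith
  · have hsn : 0 < ‖s‖ := norm_pos_iff.2 hs0'
    have key : ‖fderiv ℝ X (x t) ((α t).1 - x t) - s • fderiv ℝ X (x 0) w‖ ≤ e * ‖s‖ := by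
      have e1 : fderiv ℝ X (x t) ((α t).1 - x t) - s • fderiv ℝ X (x 0) w =
        (X (x 0 + s • w) - X (x 0) - s • fderiv ℝ X (x 0) w) -
        (X (α t).1 - X (x t) - fderiv ℝ X (x t) ((α t).1 - x t)) := by
        rw [hconst1, hconst0]; abel
      rw [e1]
      refine (norm_sub_le _ _).trans ((add_le_add hex2 (hy.trans
        (mul_le_mul_of_nonneg_left (hdist1 t htI) hc1p.le))).trans (le_of_eq ?_))
      rw [hc1]; field_simp; ring
    have e2 : fderiv ℝ X (x t) (s⁻¹ • ((α t).1 - x t)) - fderiv ℝ X (x 0) w =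
        s⁻¹ • (fderiv ℝ X (x t) ((α t).1 - x t) - s • fderiv ℝ X (x 0) w) := by
      rw [map_smul, smul_sub (s⁻¹) (fderiv ℝ X (x t) ((α t).1 - x t)), smul_smul,
        inv_mul_cancel₀ hs0', one_smul]
    rw [e2, norm_smul, norm_inv, inv_mul_le_iff₀ hsn]
    linarith

lemma core_limit {x u : ℝ → V} {b : ℝ} {r0 : ℕ} (hx : x b ∈ U)
    (hode : ∀ᶠ t in 𝓝 b, Ode B φ x u t)
    (hmin : ∀ y ∈ U, r0 ≤ kd (fderiv ℝ X y))
    (hlt : ∀ᶠ t in 𝓝[<] b, kd (fderiv ℝ X (x t)) ≤ r0 ∧ fderiv ℝ X (x t) (u t) = 0) :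
    kd (fderiv ℝ X (x b)) ≤ r0 ∧ fderiv ℝ X (x b) (u b) = 0 := by
  have hob := hode.self_of_nhds
  have hΘc : ContinuousAt (fun t => fderiv ℝ X (x t)) b :=
    (C.cX1 hx).continuousAt.comp (f := x) hob.1.continuousAt
  constructor
  swap
  · have hc : ContinuousAt (fun t => fderiv ℝ X (x t) (u t)) b :=
      hΘc.clm_apply hob.2.continuousAt
    have h1 : Tendsto (fun t => fderiv ℝ X (x t) (u t)) (𝓝[<] b) (𝓝 (fderiv ℝ X (x b) (u b))) :=
      hc.tendsto.mono_left nhdsWithin_le_nhds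
    refine tendsto_nhds_unique h1 ?_
    refine tendsto_const_nhds.congr' ?_
    filter_upwards [hlt] with t ht using ht.2.symm
  have hf : ContDiffAt ℝ 1 (fun z : V × V => (z.2, acc B φ z.1 z.2)) (x b, u b) :=
    contDiffAt_snd.prodMk ((C.cont_acc hx).of_le (by simp))
  obtain ⟨K, N0, hN0, hLip⟩ := hf.exists_lipschitzOnWith
  set N : Set (V × V) := N0 ∩ (U ×ˢ univ) with hNdef
  have hN : N ∈ 𝓝 (x b, u b) :=
    inter_mem hN0 (prod_mem_nhds (C.isOpen.mem_nhds hx) univ_mem)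
  obtain ⟨r, hr, ε, hε, hflow⟩ := flow_exists _ _ hf N hN
  have hzc : ContinuousAt (fun t => (x t, u t)) b := hob.1.continuousAt.prodMk hob.2.continuousAt
  have hev : ∀ᶠ t in 𝓝 b, (∀ᶠ s in 𝓝 t, Ode B φ x u s) ∧ (x t, u t) ∈ N ∧
      (x t, u t) ∈ Metric.ball (x b, u b) r :=
    (eventually_eventually_nhds.2 hode).and ((hzc.eventually_mem hN).and
      (hzc.eventually_mem (Metric.ball_mem_nhds _ hr)))
  obtain ⟨δ, hδ, hball⟩ := Metric.eventually_nhds_iff.1 hev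
  obtain ⟨δ', hδ', hball'⟩ := Metric.eventually_nhds_iff.1 (eventually_nhdsWithin_iff.1 hlt)
  set T := min ε (min δ δ') / 2 with hTdef
  have hmp : 0 < min ε (min δ δ') := lt_min hε (lt_min hδ hδ')
  have hT0 : 0 < T := by positivity
  have hTm : T < min ε (min δ δ') := by rw [hTdef]; linarith
  have hTε : T < ε := hTm.trans_le (min_le_left _ _)
  have hTδ : T < δ := hTm.trans_le ((min_le_right _ _).trans (min_le_left _ _))
  have hTδ' : T < δ' := hTm.trans_le ((min_le_right _ _).trans (min_le_right _ _))
  set b0 := b - T with hb0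
  have hd : ∀ τ ∈ Icc 0 T, dist (b0 + τ) b ≤ T := by
    intro τ hτ
    rw [Real.dist_eq, abs_le]
    constructor <;> linarith [hτ.1, hτ.2]
  have hL : ∀ τ ∈ Ico 0 T, kd (fderiv ℝ X (x (b0 + τ))) ≤ r0 ∧
      fderiv ℝ X (x (b0 + τ)) (u (b0 + τ)) = 0 := fun τ hτ =>
    hball' ((hd τ (Ico_subset_Icc_self hτ)).trans_lt hTδ') (by
      change b0 + τ < b
      linarith [hτ.2])
  have key : LinearMap.range (fderiv ℝ X (x b0) : V →ₗ[ℝ] (M →L[ℝ] F)) ≤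
      LinearMap.range (fderiv ℝ X (x b) : V →ₗ[ℝ] (M →L[ℝ] F)) := by
    rintro _ ⟨w, rfl⟩
    obtain ⟨K0, hK0, hvar⟩ := C.variation (x := fun τ => x (b0 + τ)) (u := fun τ => u (b0 + τ))
      (T := T) (ε := ε) (r := r) (K := K) (r0 := r0) (z0 := (x b, u b)) (N := N) hTε
      (fun z hz => hz.2.1) (hLip.mono inter_subset_left) hflow
      (hball ((hd 0 ⟨le_rfl, hT0.le⟩).trans_lt hTδ)).2.2
      (fun τ hτ => by
        have h1 := (hball ((hd τ hτ).trans_lt hTδ)).1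
        have h2 : Tendsto (fun s => b0 + s) (𝓝 τ) (𝓝 (b0 + τ)) :=
          (continuous_const.add continuous_id).tendsto _
        filter_upwards [h2.eventually h1] with s hs
        exact ⟨hs.1.comp_const_add b0 s, hs.2.comp_const_add b0 s⟩)
      (fun τ hτ => (hball ((hd τ hτ).trans_lt hTδ)).2.1) hmin (fun τ hτ => (hL τ hτ).1)
      (hL 0 ⟨le_rfl, hT0⟩).2 hT0 w
    have hcl : IsClosed (LinearMap.range (fderiv ℝ X (x b) : V →ₗ[ℝ] (M →L[ℝ] F)) :
      Set (M →L[ℝ] F)) := Submodule.closed_of_finiteDimensional _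
    refine hcl.closure_subset (Metric.mem_closure_iff.2 fun e he => ?_)
    have hnear : ∀ᶠ t in 𝓝[<] b, ‖fderiv ℝ X (x b) - fderiv ℝ X (x t)‖ * K0 < e / 2 := by
      have h1 : ContinuousAt (fun t => ‖fderiv ℝ X (x b) - fderiv ℝ X (x t)‖ * K0) b :=
        ((continuousAt_const.sub hΘc).norm).mul continuousAt_const
      have h2 : ∀ᶠ t in 𝓝 b, ‖fderiv ℝ X (x b) - fderiv ℝ X (x t)‖ * K0 < e / 2 :=
        h1.eventually_lt_const (by simp; linarith)
      exact h2.filter_mono nhdsWithin_le_nhds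
    have hin : ∀ᶠ t in 𝓝[<] b, t ∈ Ioo b0 b := Ioo_mem_nhdsLT (by linarith)
    obtain ⟨t, ht1, ht2⟩ := (hnear.and hin).exists
    obtain ⟨J, hJ, hJ2⟩ := hvar (t - b0) ⟨by linarith [ht2.1], by linarith [ht2.2]⟩ (e / 2)
      (by linarith)
    simp only [add_sub_cancel, add_zero] at hJ2
    refine ⟨fderiv ℝ X (x b) J, ⟨J, rfl⟩, ?_⟩
    rw [dist_comm, dist_eq_norm]
    have e1 : fderiv ℝ X (x b) J - fderiv ℝ X (x b0) w =
      (fderiv ℝ X (x b) - fderiv ℝ X (x t)) J + (fderiv ℝ X (x t) J - fderiv ℝ X (x b0) w) := by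
      rw [_root_.sub_apply]; abel
    have e2 : ‖(fderiv ℝ X (x b) - fderiv ℝ X (x t)) J‖ ≤ ‖fderiv ℝ X (x b) - fderiv ℝ X (x t)‖ * K0 :=
      ContinuousLinearMap.le_of_opNorm_le_of_le _ le_rfl hJ
    change ‖fderiv ℝ X (x b) J - fderiv ℝ X (x b0) w‖ < e
    rw [e1]
    refine (norm_add_le _ _).trans_lt ?_
    linarith
  have hrank := Submodule.finrank_mono key
  have n1 := LinearMap.finrank_range_add_finrank_ker (fderiv ℝ X (x b0) : V →ₗ[ℝ] (M →L[ℝ] F))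
  have n2 := LinearMap.finrank_range_add_finrank_ker (fderiv ℝ X (x b) : V →ₗ[ℝ] (M →L[ℝ] F))
  have h3 := (hL 0 ⟨le_rfl, hT0⟩).1
  rw [add_zero] at h3
  unfold kd at h3 ⊢
  omega

end CoreChart
end core4
end GNull

end

section
open Set Filter Topology
open scoped ContDiff
set_option maxSynthPendingDepth 6
set_option linter.unusedSectionVars false

namespace GNull

/-- Euclidean space of dimension `d` -/
abbrev Eu (d : ℕ) := EuclideanSpace ℝ (Fin d)

/-- the ambient form as a bounded bilinear map -/
def bil (k : SpaceFormKind) (D : ℕ) : Eu D →L[ℝ] Eu D →L[ℝ] ℝ :=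
  ∑ i, formSign k D i • (ContinuousLinearMap.smulRight (EuclideanSpace.proj i : Eu D →L[ℝ] ℝ)
    (EuclideanSpace.proj i : Eu D →L[ℝ] ℝ))

lemma bil_apply (k : SpaceFormKind) {D : ℕ} (x y : Eu D) : bil k D x y = aForm k x y := by
  simp [bil, aForm, mul_assoc]

lemma bil_symm (k : SpaceFormKind) {D : ℕ} (x y : Eu D) : bil k D x y = bil k D y x := by
  rw [bil_apply, bil_apply]
  exact Finset.sum_congr rfl fun i _ => by ring

/-- curvature sign -/
def rc (k : SpaceFormKind) : ℝ :=
  match k with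
  | .euclidean => 0
  | .sphere => 1
  | .hyperbolic => -1

lemma rc_form {k : SpaceFormKind} {D : ℕ} {p : Eu D} (hp : p ∈ spaceForm k D) (h : rc k ≠ 0) :
    aForm k p p = rc k := by
  cases k with
  | euclidean => simp [rc] at h
  | sphere => exact hp
  | hyperbolic => exact hp.1

lemma pos_sphere {k : SpaceFormKind} (hk : k ≠ .hyperbolic) {D : ℕ} {v : Eu D} (hv : v ≠ 0) :
    0 < aForm k v v := by
  have h1 : aForm k v v = ∑ i, (v i)^2 := by
    refine Finset.sum_congr rfl fun i _ => ?_
    cases k with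
    | hyperbolic => exact absurd rfl hk
    | euclidean => simp [formSign]; ring
    | sphere => simp [formSign]; ring
  have h2 : ‖v‖ ^ 2 = ∑ i, (v i)^2 := by
    rw [EuclideanSpace.norm_sq_eq]; simp
  rw [h1, ← h2]
  have : 0 < ‖v‖ := norm_pos_iff.2 hv
  positivity

lemma form_hyp {d : ℕ} (x y : Eu (d+1)) :
    aForm .hyperbolic x y = (∑ i : Fin d, x i.castSucc * y i.castSucc) -
      x (Fin.last d) * y (Fin.last d) := by
  rw [aForm, Fin.sum_univ_castSucc]
  have h1 : ∀ i : Fin d, formSign .hyperbolic (d+1) i.castSucc = 1 := by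
    intro i
    have := i.2
    simp only [formSign, Fin.val_castSucc]
    rw [if_neg (by omega)]
  have h2 : formSign .hyperbolic (d+1) (Fin.last d) = -1 := by simp [formSign]
  rw [h2]
  simp only [h1]
  rw [sub_eq_add_neg]
  congr 1
  · exact Finset.sum_congr rfl fun i _ => by ring
  · ring

lemma pos_hyp {D : ℕ} {p v : Eu D} (hp : aForm .hyperbolic p p = -1)
    (hvp : aForm .hyperbolic v p = 0) (hv : v ≠ 0) : 0 < aForm .hyperbolic v v := by
  cases D with
  | zero => simp [aForm] at hp
  | succ d =>
    rw [form_hyp] at hp hvp ⊢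
    set A := ∑ i : Fin d, v i.castSucc * v i.castSucc with hA
    set Bq := ∑ i : Fin d, p i.castSucc * p i.castSucc with hB
    set Cq := ∑ i : Fin d, v i.castSucc * p i.castSucc with hC
    have hcs : Cq ^ 2 ≤ A * Bq := by
      have := Finset.sum_mul_sq_le_sq_mul_sq Finset.univ (fun i : Fin d => v i.castSucc)
        (fun i : Fin d => p i.castSucc)
      simpa [hA, hB, hC, pow_two] using this
    have hA0 : 0 ≤ A := Finset.sum_nonneg fun i _ => mul_self_nonneg _
    have hApos : 0 < A := by
      rcases hA0.lt_or_eq with h | h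
      · exact h
      · exfalso
        apply hv
        have hall : ∀ i : Fin d, v i.castSucc = 0 := by
          intro i
          have := (Finset.sum_eq_zero_iff_of_nonneg
            (fun i _ => mul_self_nonneg (v (Fin.castSucc i)))).1 h.symm i (Finset.mem_univ i)
          simpa using this
        have hC0 : Cq = 0 := by simp [hC, hall]
        have hB0 : 0 ≤ Bq := Finset.sum_nonneg fun i _ => mul_self_nonneg _
        have hl : v (Fin.last d) = 0 := by
          rw [hC0] at hvp
          have : v (Fin.last d) * p (Fin.last d) = 0 := by linarith
          rcases mul_eq_zero.1 this with h | h
          · exact h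
          · exfalso
            rw [h] at hp
            linarith
        ext i
        refine Fin.lastCases ?_ (fun i => ?_) i
        · simpa using hl
        · simpa using hall i
    set vl := v (Fin.last d)
    set pl := p (Fin.last d)
    have hC2 : Cq = vl * pl := by linarith
    have hB2 : Bq = pl * pl - 1 := by linarith
    rw [hC2, hB2] at hcs
    by_contra hneg
    have h1 : A ≤ vl * vl := by linarith
    have h2 := mul_le_mul_of_nonneg_right h1 (mul_self_nonneg pl)
    nlinarith

lemma form_pos {k : SpaceFormKind} {D : ℕ} {p v : Eu D} (hp : p ∈ spaceForm k D)
    (hvp : rc k * aForm k v p = 0) (hv : v ≠ 0) : 0 < aForm k v v := by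
  cases k with
  | euclidean => exact pos_sphere (by simp) hv
  | sphere => exact pos_sphere (by simp) hv
  | hyperbolic => exact pos_hyp hp.1 (by simpa [rc] using hvp) hv

lemma tangent_sf_sub {k : SpaceFormKind} {D : ℕ} {p v : Eu D}
    (hv : v ∈ TangentAt (spaceForm k D) p) : rc k * aForm k v p = 0 := by
  by_cases hk : rc k = 0
  · rw [hk]; simp
  have hle : TangentAt (spaceForm k D) p ≤ LinearMap.ker ((bil k D).flip p : Eu D →ₗ[ℝ] ℝ) := by
    refine Submodule.span_le.2 ?_
    rintro v ⟨c, hc, hcS, rfl, rfl⟩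
    change (bil k D) (deriv c 0) (c 0) = 0
    have hd : HasDerivAt c (deriv c 0) 0 := (hc.differentiable (by simp) 0).hasDerivAt
    have h1 : HasDerivAt (fun t => bil k D (c t) (c t)) _ 0 :=
      ((bil k D).hasFDerivAt.comp_hasDerivAt (0:ℝ) hd).clm_apply hd
    have h2 : (fun t => bil k D (c t) (c t)) = fun _ => rc k := by
      funext t
      rw [bil_apply, rc_form (hcS t) hk]
    rw [h2] at h1
    have h3 := h1.unique (hasDerivAt_const (0:ℝ) (rc k))
    simp only [Function.comp] at h3
    rw [bil_symm k (c 0)] at h3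
    linarith
  have := hle hv
  have h2 : bil k D v p = 0 := this
  rw [← bil_apply, h2, mul_zero]

lemma tangent_sf_sup {k : SpaceFormKind} {D : ℕ} {p v : Eu D} (hp : p ∈ spaceForm k D)
    (hv : rc k * aForm k v p = 0) : v ∈ TangentAt (spaceForm k D) p := by
  by_cases hv0 : v = 0
  · rw [hv0]; exact zero_mem _
  have hpos := form_pos hp hv hv0
  set μ := Real.sqrt (aForm k v v) with hμ
  have hμp : 0 < μ := Real.sqrt_pos.2 hpos
  have hμs : μ * μ = aForm k v v := Real.mul_self_sqrt hpos.le
  set e := μ⁻¹ • v with he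
  have hve : v = μ • e := by rw [he, smul_smul, mul_inv_cancel₀ hμp.ne', one_smul]
  have hee : bil k D e e = 1 := by
    rw [he]; simp only [map_smul, _root_.smul_apply, smul_eq_mul, bil_apply, ← hμs]
    field_simp
  rw [hve]
  refine Submodule.smul_mem _ _ (Submodule.subset_span ?_)
  cases k with
  | euclidean =>
    refine ⟨fun t => p + t • e, by fun_prop, fun t => mem_univ _, by simp, ?_⟩
    have : HasDerivAt (fun t : ℝ => p + t • e) e 0 := by
      simpa using ((hasDerivAt_id (0:ℝ)).smul_const e).const_add p
    exact this.deriv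
  | sphere =>
    have hep : bil .sphere D e p = 0 := by
      rw [he, map_smul, _root_.smul_apply, bil_apply]
      simp only [rc, one_mul] at hv
      rw [hv]; simp
    have hpp : bil .sphere D p p = 1 := by rw [bil_apply]; exact hp
    refine ⟨fun t => Real.cos t • p + Real.sin t • e, by fun_prop, fun t => ?_, by simp, ?_⟩
    · change aForm .sphere _ _ = 1
      rw [← bil_apply]
      simp only [map_add, map_smul, _root_.add_apply, _root_.smul_apply, smul_eq_mul,
        hep, hpp, hee, bil_symm .sphere p e]
      nlinarith [Real.sin_sq_add_cos_sq t]
    · have : HasDerivAt (fun t : ℝ => Real.cos t • p + Real.sin t • e)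
          (-Real.sin 0 • p + Real.cos 0 • e) 0 :=
        ((Real.hasDerivAt_cos 0).smul_const p).add ((Real.hasDerivAt_sin 0).smul_const e)
      simpa using this.deriv
  | hyperbolic =>
    have hep : bil .hyperbolic D e p = 0 := by
      rw [he, map_smul, _root_.smul_apply, bil_apply]
      have : aForm .hyperbolic v p = 0 := by simpa [rc] using hv
      rw [this]; simp
    have hpp : bil .hyperbolic D p p = -1 := by rw [bil_apply]; exact hp.1
    have hform : ∀ t : ℝ, aForm .hyperbolic (Real.cosh t • p + Real.sinh t • e)
        (Real.cosh t • p + Real.sinh t • e) = -1 := by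
      intro t
      rw [← bil_apply]
      simp only [map_add, map_smul, _root_.add_apply, _root_.smul_apply, smul_eq_mul,
        hep, hpp, hee, bil_symm .hyperbolic p e]
      nlinarith [Real.cosh_sq t]
    refine ⟨fun t => Real.cosh t • p + Real.sinh t • e, ?_, fun t => ⟨hform t, ?_⟩, by simp, ?_⟩
    · exact (Real.contDiff_cosh.smul contDiff_const).add (Real.contDiff_sinh.smul contDiff_const)
    · intro i hi
      have hD : D ≠ 0 := fun h => by subst h; exact i.elim0
      obtain ⟨d, rfl⟩ := Nat.exists_eq_succ_of_ne_zero hD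
      have hil : i = Fin.last d := by ext; simp; omega
      subst hil
      have hne : ∀ s : ℝ, (Real.cosh s • p + Real.sinh s • e) (Fin.last d) ≠ 0 := by
        intro s h
        have := hform s
        rw [form_hyp, h] at this
        have h2 : 0 ≤ ∑ i : Fin d, (Real.cosh s • p + Real.sinh s • e) i.castSucc *
          (Real.cosh s • p + Real.sinh s • e) i.castSucc :=
          Finset.sum_nonneg fun i _ => mul_self_nonneg _
        linarith
      have hcont : Continuous fun s : ℝ => (Real.cosh s • p + Real.sinh s • e) (Fin.last d) := by
        simp only [PiLp.add_apply, PiLp.smul_apply]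
        exact (Real.continuous_cosh.smul continuous_const).add
          (Real.continuous_sinh.smul continuous_const)
      by_contra hneg
      push Not at hneg
      have h0 : 0 < (Real.cosh 0 • p + Real.sinh 0 • e) (Fin.last d) := by
        simpa using hp.2 _ hi
      obtain ⟨s, hs⟩ := mem_range_of_exists_le_of_exists_ge hcont ⟨t, hneg⟩ ⟨0, h0.le⟩
      exact hne s hs
    · have : HasDerivAt (fun t : ℝ => Real.cosh t • p + Real.sinh t • e)
          (Real.sinh 0 • p + Real.cosh 0 • e) 0 :=
        ((Real.hasDerivAt_cosh 0).smul_const p).add ((Real.hasDerivAt_sinh 0).smul_const e)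
      simpa using this.deriv

end GNull

end

section
open Set Filter Topology
open scoped ContDiff
set_option maxSynthPendingDepth 6
set_option linter.unusedSectionVars false

namespace GNull

/-- a chart of `S` together with a smooth retraction-like inverse -/
structure PreChart {D n : ℕ} (S : Set (Eu D)) (φ : Eu n → Eu D) (U : Set (Eu n)) (ρ : Eu D → Eu n)
    (N : Set (Eu D)) : Prop where
  isOpen : IsOpen U
  smooth : ContDiffOn ℝ ∞ φ U
  isOpenN : IsOpen N
  smoothρ : ContDiffOn ℝ ∞ ρ N
  mapS : ∀ x ∈ U, φ x ∈ S
  mapN : ∀ x ∈ U, φ x ∈ N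
  left : ∀ x ∈ U, ρ (φ x) = x
  mapU : ∀ y ∈ S, y ∈ N → ρ y ∈ U
  right : ∀ y ∈ S, y ∈ N → φ (ρ y) = y

lemma exists_preChart {D n : ℕ} {S : Set (Eu D)} (hsub : IsSubmanifold S n) {p : Eu D}
    (hp : p ∈ S) : ∃ φ U ρ N, PreChart (n := n) S φ U ρ N ∧ p ∈ N := by
  obtain ⟨φ, U, h⟩ := hsub p hp
  obtain ⟨x0, hx0, rfl⟩ := h.mem
  obtain ⟨V, hV, hVim⟩ := h.openImage
  obtain ⟨ψ, hψc, hψ⟩ := h.embedding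
  have hcd : ∀ x ∈ U, ContDiffAt ℝ ∞ φ x := fun x hx =>
    (h.smooth x hx).contDiffAt (h.isOpen.mem_nhds hx)
  have hinj : Function.Injective (fderiv ℝ φ x0) := by
    have := h.immersion x0 hx0
    rwa [fderivWithin_of_isOpen h.isOpen hx0] at this
  obtain ⟨Λ', hΛ'⟩ := (fderiv ℝ φ x0 : Eu n →ₗ[ℝ] Eu D).exists_leftInverse_of_injective
    (LinearMap.ker_eq_bot.2 hinj)
  set Λ : Eu D →L[ℝ] Eu n := LinearMap.toContinuousLinearMap Λ' with hΛ
  set g : Eu n → Eu n := fun x => Λ (φ x) with hg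
  have hgd : ∀ x ∈ U, HasFDerivAt g (Λ.comp (fderiv ℝ φ x)) x := fun x hx =>
    Λ.hasFDerivAt.comp x ((hcd x hx).differentiableAt (by simp)).hasFDerivAt
  have hgc : ∀ x ∈ U, ContDiffAt ℝ ∞ g x := fun x hx => Λ.contDiff.contDiffAt.comp x (hcd x hx)
  have hg0 : Λ.comp (fderiv ℝ φ x0) =
      ((ContinuousLinearEquiv.refl ℝ (Eu n) : Eu n ≃L[ℝ] Eu n) : Eu n →L[ℝ] Eu n) := by
    ext1 z
    exact LinearMap.congr_fun hΛ' z
  have hg0d : HasFDerivAt g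
      ((ContinuousLinearEquiv.refl ℝ (Eu n) : Eu n ≃L[ℝ] Eu n) : Eu n →L[ℝ] Eu n) x0 := by
    rw [← hg0]; exact hgd x0 hx0
  set e := (hgc x0 hx0).toOpenPartialHomeomorph g hg0d (by simp) with he
  have hesrc : x0 ∈ e.source := (hgc x0 hx0).mem_toOpenPartialHomeomorph_source hg0d (by simp)
  have heg : ∀ x, e x = g x := fun x => rfl
  have hinvev : ∀ᶠ x in 𝓝 x0, Λ.comp (fderiv ℝ φ x) ∈
      range ((↑) : (Eu n ≃L[ℝ] Eu n) → (Eu n →L[ℝ] Eu n)) := by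
    have h1 : ContinuousAt (fun x => Λ.comp (fderiv ℝ φ x)) x0 :=
      (continuousAt_const (y := Λ)).clm_comp
        ((hcd x0 hx0).fderiv_right (m := ∞) (by simp)).continuousAt
    refine h1.eventually_mem ?_
    rw [hg0]
    exact ContinuousLinearEquiv.nhds _
  obtain ⟨U1, hU1sub, hU1o, hx0U1⟩ := mem_nhds_iff.1
    (inter_mem (inter_mem (h.isOpen.mem_nhds hx0) (e.open_source.mem_nhds hesrc)) hinvev)
  have hU1U : ∀ x ∈ U1, x ∈ U := fun x hx => (hU1sub hx).1.1
  have hU1s : ∀ x ∈ U1, x ∈ e.source := fun x hx => (hU1sub hx).1.2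
  have hU1i : ∀ x ∈ U1, Λ.comp (fderiv ℝ φ x) ∈
      range ((↑) : (Eu n ≃L[ℝ] Eu n) → (Eu n →L[ℝ] Eu n)) := fun x hx => (hU1sub hx).2
  have hW : IsOpen (e '' U1) := e.isOpen_image_of_subset_source hU1o hU1s
  -- neighbourhood of p from continuity of ψ
  obtain ⟨N', hN'o, hpN', hN'⟩ : ∃ N', IsOpen N' ∧ φ x0 ∈ N' ∧ ∀ y ∈ φ '' U, y ∈ N' → ψ y ∈ U1 := by
    have h1 := hψc (φ x0) ⟨x0, hx0, rfl⟩
    have h2 : ∀ᶠ y in 𝓝[φ '' U] (φ x0), ψ y ∈ U1 := by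
      refine h1.eventually_mem ?_
      rw [hψ x0 hx0]; exact hU1o.mem_nhds hx0U1
    obtain ⟨N', hN'o, hp', hs⟩ := mem_nhdsWithin.1 h2
    exact ⟨N', hN'o, hp', fun y hy hy' => hs ⟨hy', hy⟩⟩
  set N : Set (Eu D) := V ∩ N' ∩ Λ ⁻¹' (e '' U1) with hNdef
  have hNo : IsOpen N := (hV.inter hN'o).inter (hW.preimage Λ.continuous)
  have hsm1 : ContDiffOn ℝ ∞ φ U1 := h.smooth.mono hU1U
  have hsol : ∀ y ∈ S, y ∈ N → ∃ x ∈ U1, φ x = y := by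
    intro y hyS hyN
    have : y ∈ φ '' U := by rw [hVim]; exact ⟨hyS, hyN.1.1⟩
    have h2 := hN' y this hyN.1.2
    obtain ⟨x, hx, rfl⟩ := this
    rw [hψ x hx] at h2
    exact ⟨x, h2, rfl⟩
  have hleft : ∀ x ∈ U1, e.symm (Λ (φ x)) = x := fun x hx => e.left_inv (hU1s x hx)
  refine ⟨φ, U1 ∩ φ ⁻¹' N, fun y => e.symm (Λ y), N, ⟨?_, ?_, hNo, ?_, ?_, ?_, ?_, ?_, ?_⟩, ?_⟩
  · exact hsm1.continuousOn.isOpen_inter_preimage hU1o hNo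
  · exact hsm1.mono inter_subset_left
  · intro y hy
    obtain ⟨x, hx, hxy⟩ := hy.2
    have hs : e.symm (Λ y) = x := by rw [← hxy]; exact e.left_inv (hU1s x hx)
    obtain ⟨f', hf'⟩ := hU1i x hx
    have h1 : ContDiffAt ℝ ∞ e.symm (Λ y) := by
      refine e.contDiffAt_symm (f₀' := f') ?_ ?_ ?_
      · rw [← hxy]; exact e.map_source (hU1s x hx)
      · rw [hs, hf']; exact hgd x (hU1U x hx)
      · rw [hs]; exact hgc x (hU1U x hx)
    exact (h1.comp y Λ.contDiff.contDiffAt).contDiffWithinAt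
  · intro x hx
    have : φ x ∈ φ '' U := ⟨x, hU1U x hx.1, rfl⟩
    rw [hVim] at this
    exact this.1
  · exact fun x hx => hx.2
  · exact fun x hx => hleft x hx.1
  · intro y hyS hyN
    obtain ⟨x, hx, rfl⟩ := hsol y hyS hyN
    rw [hleft x hx]
    exact ⟨hx, hyN⟩
  · intro y hyS hyN
    obtain ⟨x, hx, rfl⟩ := hsol y hyS hyN
    change φ (e.symm (Λ (φ x))) = _
    rw [hleft x hx]
  · refine ⟨⟨?_, hpN'⟩, ⟨x0, hx0U1, rfl⟩⟩
    have : φ x0 ∈ φ '' U := ⟨x0, hx0, rfl⟩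
    rw [hVim] at this
    exact this.2

namespace PreChart
variable {D n : ℕ} {S : Set (Eu D)} {φ : Eu n → Eu D} {U : Set (Eu n)} {ρ : Eu D → Eu n}
    {N : Set (Eu D)}

lemma restrict (P : PreChart S φ U ρ N) {N1 : Set (Eu D)} (hN1 : IsOpen N1) :
    PreChart S φ (U ∩ φ ⁻¹' N1) ρ (N ∩ N1) where
  isOpen := P.smooth.continuousOn.isOpen_inter_preimage P.isOpen hN1
  smooth := P.smooth.mono inter_subset_left
  isOpenN := P.isOpenN.inter hN1
  smoothρ := P.smoothρ.mono inter_subset_left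
  mapS x hx := P.mapS x hx.1
  mapN x hx := ⟨P.mapN x hx.1, hx.2⟩
  left x hx := P.left x hx.1
  mapU y hS hN := ⟨P.mapU y hS hN.1, by
    change φ (ρ y) ∈ N1
    rw [P.right y hS hN.1]; exact hN.2⟩
  right y hS hN := P.right y hS hN.1

variable (P : PreChart S φ U ρ N)
include P

lemma cφ {x : Eu n} (hx : x ∈ U) : ContDiffAt ℝ ∞ φ x :=
  (P.smooth x hx).contDiffAt (P.isOpen.mem_nhds hx)
lemma cφ1 {x : Eu n} (hx : x ∈ U) : ContDiffAt ℝ ∞ (fderiv ℝ φ) x :=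
  (P.cφ hx).fderiv_right (m := ∞) (by simp)
lemma cρ {y : Eu D} (hy : y ∈ N) : ContDiffAt ℝ ∞ ρ y :=
  (P.smoothρ y hy).contDiffAt (P.isOpenN.mem_nhds hy)
lemma dφ {x : Eu n} (hx : x ∈ U) : HasFDerivAt φ (fderiv ℝ φ x) x :=
  ((P.cφ hx).differentiableAt (by simp)).hasFDerivAt
lemma dφ1 {x : Eu n} (hx : x ∈ U) : HasFDerivAt (fderiv ℝ φ) (fderiv ℝ (fderiv ℝ φ) x) x :=
  ((P.cφ1 hx).differentiableAt (by simp)).hasFDerivAt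

lemma inj {x : Eu n} (hx : x ∈ U) : Function.Injective (fderiv ℝ φ x) := by
  have h1 : HasFDerivAt ρ (fderiv ℝ ρ (φ x)) (φ x) :=
    ((P.cρ (P.mapN x hx)).differentiableAt (by simp)).hasFDerivAt
  have h2 := h1.comp x (P.dφ hx)
  have h3 : (ρ ∘ φ) =ᶠ[𝓝 x] id := by
    filter_upwards [P.isOpen.mem_nhds hx] with y hy using P.left y hy
  have h4 := (h2.congr_of_eventuallyEq h3.symm).unique (hasFDerivAt_id x)
  intro a b hab
  have h5 := congrArg (fun l : Eu n →L[ℝ] Eu n => l a - l b) h4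
  simp only [ContinuousLinearMap.comp_apply, hab, sub_self, ContinuousLinearMap.id_apply] at h5
  exact (sub_eq_zero.1 h5.symm)

lemma exists_curve {x : Eu n} (hx : x ∈ U) (w : Eu n) : ∃ σ : ℝ → ℝ, ContDiff ℝ ∞ σ ∧ σ 0 = 0 ∧
    HasDerivAt σ 1 0 ∧ ∀ t, x + σ t • w ∈ U := by
  have h1 : ∀ᶠ s in 𝓝 (0:ℝ), x + s • w ∈ U := by
    have : Tendsto (fun s : ℝ => x + s • w) (𝓝 0) (𝓝 (x + (0:ℝ) • w)) :=
      (continuous_const.add (continuous_id.smul continuous_const)).tendsto _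
    refine this.eventually_mem ?_
    rw [zero_smul, add_zero]
    exact P.isOpen.mem_nhds hx
  obtain ⟨δ, hδ, hb⟩ := Metric.eventually_nhds_iff.1 h1
  refine ⟨fun t => δ / 2 * Real.sin ((δ/2)⁻¹ * t), by fun_prop, by simp, ?_, fun t => hb ?_⟩
  · have h2 : HasDerivAt (fun t : ℝ => (δ/2)⁻¹ * t) ((δ/2)⁻¹ * 1) 0 :=
      (hasDerivAt_id (0:ℝ)).const_mul _
    have := (h2.sin).const_mul (δ/2)
    have h4 : δ / 2 * (Real.cos ((δ/2)⁻¹ * 0) * ((δ/2)⁻¹ * 1)) = 1 := by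
      rw [mul_zero, Real.cos_zero]; field_simp
    rw [h4] at this
    exact this
  · rw [Real.dist_eq, sub_zero, abs_mul, abs_of_pos (by linarith : 0 < δ / 2)]
    nlinarith [Real.abs_sin_le_one ((δ/2)⁻¹ * t)]

lemma curve_smooth {x w : Eu n} {σ : ℝ → ℝ} (hσ : ContDiff ℝ ∞ σ) (hU : ∀ t, x + σ t • w ∈ U) :
    ContDiff ℝ ∞ (fun t => φ (x + σ t • w)) :=
  P.smooth.comp_contDiff (contDiff_const.add (hσ.smul contDiff_const)) hU

/-- pulling back a curve in `S` -/
lemma pull {c : ℝ → Eu D} {t : ℝ} (hc : ContDiff ℝ ∞ c) (hS : ∀ t, c t ∈ S) (hN : c t ∈ N) :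
    ∀ᶠ s in 𝓝 t, ρ (c s) ∈ U ∧ φ (ρ (c s)) = c s ∧ ContDiffAt ℝ ∞ (fun s => ρ (c s)) s := by
  filter_upwards [hc.continuous.continuousAt.eventually_mem (P.isOpenN.mem_nhds hN)] with s hs
  exact ⟨P.mapU _ (hS s) hs, P.right _ (hS s) hs, (P.cρ hs).comp s hc.contDiffAt⟩

lemma pull_deriv {c : ℝ → Eu D} {t : ℝ} (hc : ContDiff ℝ ∞ c) (hS : ∀ t, c t ∈ S) (hN : c t ∈ N) :
    deriv c t = fderiv ℝ φ (ρ (c t)) (deriv (fun s => ρ (c s)) t) := by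
  have h := P.pull hc hS hN
  have h0 := h.self_of_nhds
  have h1 := (P.dφ h0.1).comp_hasDerivAt t (h0.2.2.differentiableAt (by simp)).hasDerivAt
  have h2 : c =ᶠ[𝓝 t] (φ ∘ fun s => ρ (c s)) := by
    filter_upwards [h] with s hs using hs.2.1.symm
  rw [h2.deriv_eq]
  exact h1.deriv

lemma tangent {x : Eu n} (hx : x ∈ U) :
    TangentAt S (φ x) = LinearMap.range (fderiv ℝ φ x : Eu n →ₗ[ℝ] Eu D) := by
  apply le_antisymm
  · refine Submodule.span_le.2 ?_
    rintro v ⟨c, hc, hcS, hc0, rfl⟩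
    have hN : c 0 ∈ N := by rw [hc0]; exact P.mapN x hx
    rw [P.pull_deriv hc hcS hN, hc0, P.left x hx]
    exact ⟨_, rfl⟩
  · rintro _ ⟨w, rfl⟩
    obtain ⟨σ, hσ, hσ0, hσ1, hU⟩ := P.exists_curve hx w
    refine Submodule.subset_span ⟨fun t => φ (x + σ t • w), P.curve_smooth hσ hU,
      fun t => P.mapS _ (hU t), by simp [hσ0], ?_⟩
    have h1 : HasDerivAt (fun t => x + σ t • w) ((1:ℝ) • w) 0 := (hσ1.smul_const w).const_add x
    have h2 : HasFDerivAt φ (fderiv ℝ φ x) (x + σ 0 • w) := by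
      rw [hσ0, zero_smul, add_zero]; exact P.dφ hx
    have h3 := (h2.comp_hasDerivAt (0:ℝ) h1).deriv
    rw [one_smul] at h3; exact h3

end PreChart
end GNull

end

section
open Set Filter Topology
open scoped ContDiff
set_option maxSynthPendingDepth 6
set_option linter.unusedSectionVars false

namespace GNull

lemma const_Ioo {E : Type*} [NormedAddCommGroup E] [NormedSpace ℝ E] {f : ℝ → E} {a b : ℝ}
    (h : ∀ t ∈ Ioo a b, HasDerivAt f 0 t) {s t : ℝ} (hs : s ∈ Ioo a b) (ht : t ∈ Ioo a b) :
    f s = f t :=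
  isOpen_Ioo.is_const_of_deriv_eq_zero isPreconnected_Ioo
    (fun r hr => (h r hr).differentiableAt.differentiableWithinAt)
    (fun r hr => (h r hr).deriv) hs ht

lemma bootstrap {E : Type*} [NormedAddCommGroup E] [NormedSpace ℝ E] {f : E → E} {O : Set E}
    (hf : ContDiffOn ℝ ∞ f O) {α : ℝ → E} {a b : ℝ}
    (hα : ∀ t ∈ Ioo a b, HasDerivAt α (f (α t)) t ∧ α t ∈ O) : ContDiffOn ℝ ∞ α (Ioo a b) := by
  rw [contDiffOn_infty]
  intro n
  induction n with
  | zero =>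
    exact contDiffOn_zero.2 fun t ht => (hα t ht).1.continuousAt.continuousWithinAt
  | succ n ih =>
    have := (contDiffOn_succ_iff_deriv_of_isOpen (n := n) (f := α) (isOpen_Ioo (a := a) (b := b))).2
    refine this ⟨fun t ht => (hα t ht).1.differentiableAt.differentiableWithinAt, by simp, ?_⟩
    have h1 : ContDiffOn ℝ n (fun t => f (α t)) (Ioo a b) :=
      (hf.of_le (by exact_mod_cast le_top)).comp ih fun t ht => (hα t ht).2
    exact h1.congr fun t ht => (hα t ht).1.deriv

section
variable {V F : Type*} [NormedAddCommGroup V] [NormedSpace ℝ V] [FiniteDimensional ℝ V]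
  [NormedAddCommGroup F] [NormedSpace ℝ F] [FiniteDimensional ℝ F]

lemma transport_exists (B : F →L[ℝ] F →L[ℝ] ℝ) {U : Set V} {φ : V → F} (hU : IsOpen U)
    (hφ : ContDiffOn ℝ ∞ φ U)
    (pos : ∀ x ∈ U, ∀ z, z ≠ 0 → B (fderiv ℝ φ x z) (fderiv ℝ φ x z) ≠ 0)
    {x : V} (hx : x ∈ U) (u : V) (y0 : F) :
    ∃ ε > 0, ∃ (s : ℝ → ℝ) (Y : ℝ → F), s 0 = 0 ∧ Y 0 = y0 ∧ ContDiffOn ℝ ∞ s (Ioo (-ε) ε) ∧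
      ContDiffOn ℝ ∞ Y (Ioo (-ε) ε) ∧ ∀ τ ∈ Ioo (-ε) ε, x + s τ • u ∈ U ∧ HasDerivAt s 1 τ ∧
      ∃ z, HasDerivAt Y (fderiv ℝ φ (x + s τ • u) z) τ ∧ ∀ w,
        B (fderiv ℝ φ (x + s τ • u) z) (fderiv ℝ φ (x + s τ • u) w) =
          - B (Y τ) (fderiv ℝ (fderiv ℝ φ) (x + s τ • u) u w) := by
  set q : ℝ × F → V := fun z => x + z.1 • u with hq
  have hqc : ContDiff ℝ ∞ q := contDiff_const.add (contDiff_fst.smul contDiff_const)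
  set O : Set (ℝ × F) := q ⁻¹' U with hO
  have hOo : IsOpen O := hU.preimage hqc.continuous
  set G : ℝ × F → V := fun z => - gi B (fderiv ℝ φ (q z))
    (star B (fderiv ℝ (fderiv ℝ φ) (q z) u) z.2) with hG
  set f : ℝ × F → ℝ × F := fun z => (1, fderiv ℝ φ (q z) (G z)) with hf
  have hc0 : ∀ y ∈ U, ContDiffAt ℝ ∞ φ y := fun y hy => (hφ y hy).contDiffAt (hU.mem_nhds hy)
  have hc1 : ∀ y ∈ U, ContDiffAt ℝ ∞ (fderiv ℝ φ) y := fun y hy =>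
    (hc0 y hy).fderiv_right (m := ∞) (by simp)
  have hc2 : ∀ y ∈ U, ContDiffAt ℝ ∞ (fderiv ℝ (fderiv ℝ φ)) y := fun y hy =>
    (hc1 y hy).fderiv_right (m := ∞) (by simp)
  have hfc : ∀ z ∈ O, ContDiffAt ℝ ∞ f z := by
    intro z hz
    have h1 : ContDiffAt ℝ ∞ (fun z => fderiv ℝ φ (q z)) z :=
      ContDiffAt.comp z (hc1 _ hz) hqc.contDiffAt
    have h2 : ContDiffAt ℝ ∞ (fun z => fderiv ℝ (fderiv ℝ φ) (q z)) z :=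
      ContDiffAt.comp z (hc2 _ hz) hqc.contDiffAt
    have h3 : ContDiffAt ℝ ∞ G z :=
      ((contDiffAt_gi B h1 (pos _ hz)).clm_apply ((contDiffAt_star B
        (h2.clm_apply contDiffAt_const)).clm_apply contDiffAt_snd)).neg
    exact contDiffAt_const.prodMk (h1.clm_apply h3)
  have hz0 : ((0, y0) : ℝ × F) ∈ O := by
    change x + (0:ℝ) • u ∈ U
    rwa [zero_smul, add_zero]
  obtain ⟨r, hr, ε, hε, H⟩ := flow_exists f (0, y0) ((hfc _ hz0).of_le (by exact_mod_cast le_top))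
    O (hOo.mem_nhds hz0)
  obtain ⟨α, hα0, hα⟩ := H (0, y0) (Metric.mem_closedBall_self hr.le)
  have hsm := bootstrap (fun z hz => (hfc z hz).contDiffWithinAt) hα
  refine ⟨ε, hε, fun t => (α t).1, fun t => (α t).2, by simp [hα0], by simp [hα0],
    hsm.fst, hsm.snd, fun τ hτ => ⟨(hα τ hτ).2, (hα τ hτ).1.fst, G (α τ), (hα τ hτ).1.snd, ?_⟩⟩
  intro w
  have h := congrArg (fun l : V →L[ℝ] ℝ => l w) (g_gi B (fderiv ℝ φ (q (α τ))) (pos _ (hα τ hτ).2)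
    (star B (fderiv ℝ (fderiv ℝ φ) (q (α τ)) u) (α τ).2))
  simp only [star_apply] at h
  simp only [hG, map_neg, _root_.neg_apply]
  rw [← h]

end

end GNull

end

section
open Set Filter Topology
open scoped ContDiff
set_option maxSynthPendingDepth 6
set_option linter.unusedSectionVars false

namespace GNull

lemma tangentAt_mono {D : ℕ} {S T : Set (Eu D)} (h : S ⊆ T) (p : Eu D) :
    TangentAt S p ≤ TangentAt T p := by
  refine Submodule.span_mono ?_
  rintro v ⟨c, h1, h2, h3⟩
  exact ⟨c, h1, fun t => h (h2 t), h3⟩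

variable {k : SpaceFormKind} {D n m : ℕ} {S : Set (Eu D)} {φ : Eu n → Eu D} {U : Set (Eu n)}
  {ρ : Eu D → Eu n} {N : Set (Eu D)} {ν₁ : Eu D → Submodule ℝ (Eu D)}

lemma PreChart.pos (P : PreChart S φ U ρ N) (hSF : S ⊆ spaceForm k D) {x : Eu n} (hx : x ∈ U)
    (z : Eu n) (hz : z ≠ 0) : bil k D (fderiv ℝ φ x z) (fderiv ℝ φ x z) ≠ 0 := by
  rw [bil_apply]
  refine (form_pos (hSF (P.mapS x hx)) (tangent_sf_sub (tangentAt_mono hSF _ ?_)) ?_).ne'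
  · rw [P.tangent hx]; exact ⟨z, rfl⟩
  · intro h
    exact hz (P.inj hx (h.trans (map_zero _).symm))

set_option maxHeartbeats 2000000 in
lemma par_of_parallel {X : Eu n → (Eu m →L[ℝ] Eu D)} {L : Eu D →L[ℝ] Eu m}
    (P : PreChart S φ U ρ N) (hSF : S ⊆ spaceForm k D)
    (hb : IsParallelNormalSubbundle k S ν₁ m) (hX : ContDiffOn ℝ ∞ X U)
    (hrange : ∀ x ∈ U, ν₁ (φ x) = LinearMap.range (X x : Eu m →ₗ[ℝ] Eu D))
    (hnorm : ∀ x ∈ U, ∀ a, L (X x a) = a)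
    (orth : ∀ x ∈ U, ∀ a w, bil k D (X x a) (fderiv ℝ φ x w) = 0) :
    ∀ x ∈ U, ∀ u a, ∃ z a', fderiv ℝ X x u a = fderiv ℝ φ x z + X x a' := by
  intro x hx u a
  obtain ⟨ε, hε, s, Y, hs0, hY0, hsC, hYC, H⟩ := transport_exists (bil k D) P.isOpen P.smooth
    (fun y hy => P.pos hSF hy) hx u (X x a)
  have h0ε : (0:ℝ) ∈ Ioo (-ε) ε := ⟨by linarith, hε⟩
  have hlin : ∀ τ ∈ Ioo (-ε) ε, HasDerivAt (fun τ => x + s τ • u) u τ := by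
    intro τ hτ
    have := ((H τ hτ).2.1.smul_const u).const_add x
    rwa [one_smul] at this
  have orthY : ∀ τ ∈ Ioo (-ε) ε, ∀ w, bil k D (Y τ) (fderiv ℝ φ (x + s τ • u) w) = 0 := by
    intro τ hτ w
    have h1 : ∀ t ∈ Ioo (-ε) ε,
        HasDerivAt (fun t => bil k D (Y t) (fderiv ℝ φ (x + s t • u) w)) 0 t := by
      intro t ht
      obtain ⟨hU, hs, z, hY, hz⟩ := H t ht
      have h2 : HasDerivAt (fun t => fderiv ℝ φ (x + s t • u))
          (fderiv ℝ (fderiv ℝ φ) (x + s t • u) u) t :=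
        (P.dφ1 hU).comp_hasDerivAt t (hlin t ht)
      have h3 := ((bil k D).hasFDerivAt.comp_hasDerivAt t hY).clm_apply
        (h2.clm_apply (hasDerivAt_const t w))
      refine h3.congr_deriv ?_
      simp [hz w]
    have h2 := const_Ioo h1 hτ h0ε
    rw [h2, hY0, hs0, zero_smul, add_zero]
    exact orth x hx a w
  have htan : ∀ y ∈ U, ∀ z, rc k * bil k D (fderiv ℝ φ y z) (φ y) = 0 := by
    intro y hy z
    rw [bil_apply]
    refine tangent_sf_sub (tangentAt_mono hSF _ ?_)
    rw [P.tangent hy]; exact ⟨z, rfl⟩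
  have radY : ∀ τ ∈ Ioo (-ε) ε, rc k * bil k D (Y τ) (φ (x + s τ • u)) = 0 := by
    intro τ hτ
    have h1 : ∀ t ∈ Ioo (-ε) ε,
        HasDerivAt (fun t => rc k * bil k D (Y t) (φ (x + s t • u))) 0 t := by
      intro t ht
      obtain ⟨hU, hs, z, hY, hz⟩ := H t ht
      have h2 : HasDerivAt (fun t => φ (x + s t • u)) (fderiv ℝ φ (x + s t • u) u) t :=
        (P.dφ hU).comp_hasDerivAt t (hlin t ht)
      have h3 := (((bil k D).hasFDerivAt.comp_hasDerivAt t hY).clm_apply h2).const_mul (rc k)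
      refine h3.congr_deriv ?_
      rw [mul_add]
      have h4 := orthY t ht u
      have h5 := htan _ hU z
      simp only [Function.comp_apply]
      rw [h4, mul_zero, add_zero]
      exact h5
    have h2 := const_Ioo h1 hτ h0ε
    rw [h2, hY0, hs0, zero_smul, add_zero, bil_apply]
    refine tangent_sf_sub (hb.normal _ (P.mapS x hx) _ ?_).1
    rw [hrange x hx]; exact ⟨a, rfl⟩
  set δ := ε / 2 with hδ
  have hδ0 : 0 < δ := by positivity
  set g : ℝ → ℝ := fun t => δ * Real.sin t with hg
  have hgC : ContDiff ℝ ∞ g := by fun_prop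
  have hgI : ∀ t, g t ∈ Ioo (-ε) ε := by
    intro t
    have := Real.neg_one_le_sin t
    have := Real.sin_le_one t
    constructor <;> simp only [hg] <;> nlinarith
  have hg0 : g 0 = 0 := by simp [hg]
  have hgd : ∀ t, HasDerivAt g (δ * Real.cos t) t := fun t => (Real.hasDerivAt_sin t).const_mul δ
  set c : ℝ → Eu D := fun t => φ (x + s (g t) • u) with hc
  set ξ : ℝ → Eu D := fun t => Y (g t) with hξ
  have hcC : ContDiff ℝ ∞ c :=
    P.curve_smooth (hsC.comp_contDiff hgC hgI) fun t => (H _ (hgI t)).1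
  have hξC : ContDiff ℝ ∞ ξ := hYC.comp_contDiff hgC hgI
  have hcS : ∀ t, c t ∈ S := fun t => P.mapS _ (H _ (hgI t)).1
  have hmem : ∀ t, ξ t ∈ ν₁ (c t) := by
    refine hb.parallel c ξ hcC hcS hξC ?_ ?_ ?_
    · intro t
      have hU := (H _ (hgI t)).1
      refine ⟨tangent_sf_sup (hSF (hcS t)) ?_, ?_⟩
      · rw [← bil_apply]; exact radY _ (hgI t)
      · intro w hw
        rw [P.tangent hU] at hw
        obtain ⟨w, rfl⟩ := hw
        rw [← bil_apply]
        exact orthY _ (hgI t) w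
    · intro t
      obtain ⟨hU, hs, z, hY, hz⟩ := H _ (hgI t)
      have h1 : HasDerivAt ξ _ t := hY.scomp t (hgd t)
      rw [h1.deriv]
      refine Submodule.mem_sup_left (Submodule.smul_mem _ _ ?_)
      rw [P.tangent hU]; exact ⟨z, rfl⟩
    · have hc0 : c 0 = φ x := by simp only [hc]; rw [hg0, hs0, zero_smul, add_zero]
      have hξ0 : ξ 0 = X x a := by simp only [hξ]; rw [hg0, hY0]
      rw [hc0, hξ0, hrange x hx]
      exact ⟨a, rfl⟩
  have hkey : ∀ t, X (x + s (g t) • u) (L (ξ t)) = ξ t := by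
    intro t
    have h := hmem t
    have hU := (H _ (hgI t)).1
    rw [hc, hrange _ hU] at h
    obtain ⟨b, hb⟩ := h
    change X _ b = ξ t at hb
    rw [← hb, hnorm _ hU]
  obtain ⟨hU, hs, z, hY, hz⟩ := H _ (hgI 0)
  have hξ1 : HasDerivAt ξ _ 0 := hY.scomp 0 (hgd 0)
  have hq1 : HasDerivAt (fun t => x + s (g t) • u) _ 0 := (hlin _ (hgI 0)).scomp 0 (hgd 0)
  have hx0 : x + s (g 0) • u = x := by rw [hg0, hs0, zero_smul, add_zero]
  have hXd : HasFDerivAt X (fderiv ℝ X x) (x + s (g 0) • u) := by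
    rw [hx0]
    exact (((hX x hx).contDiffAt (P.isOpen.mem_nhds hx)).differentiableAt (by simp)).hasFDerivAt
  have h1 := (hXd.comp_hasDerivAt (0:ℝ) hq1).clm_apply (L.hasFDerivAt.comp_hasDerivAt (0:ℝ) hξ1)
  have h2 : (fun t => (X ∘ fun t => x + s (g t) • u) t ((L ∘ ξ) t)) = ξ := funext hkey
  rw [h2] at h1
  have h3 := h1.unique hξ1
  simp only [Function.comp_apply, hx0, Real.cos_zero, mul_one, map_smul, _root_.smul_apply] at h3
  have hξ0 : ξ 0 = X x a := by simp only [hξ]; rw [hg0, hY0]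
  rw [hξ0, hnorm x hx, ← smul_add] at h3
  have h4 := smul_right_injective (Eu D) hδ0.ne' h3
  refine ⟨z, - L (fderiv ℝ φ x z), ?_⟩
  rw [map_neg, eq_comm, ← sub_eq_add_neg, sub_eq_iff_eq_add]
  exact h4.symm

end GNull

end

section
open Set Filter Topology
open scoped ContDiff
set_option maxSynthPendingDepth 6
set_option linter.unusedSectionVars false

namespace GNull

/-- chart of `S` together with an adapted frame of the subbundle -/
structure GoodChart {D n m : ℕ} (k : SpaceFormKind) (S : Set (Eu D))
    (ν₁ : Eu D → Submodule ℝ (Eu D)) (φ : Eu n → Eu D) (U : Set (Eu n)) (ρ : Eu D → Eu n)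
    (N : Set (Eu D)) (X : Eu n → (Eu m →L[ℝ] Eu D)) (L : Eu D →L[ℝ] Eu m) : Prop where
  core : CoreChart (bil k D) U φ X L
  pre : PreChart S φ U ρ N
  rng : ∀ x ∈ U, ν₁ (φ x) = LinearMap.range (X x : Eu m →ₗ[ℝ] Eu D)

/-- frame map -/
def frame {D m : ℕ} (ξ : Fin m → (Eu D → Eu D)) (y : Eu D) : Eu m →L[ℝ] Eu D :=
  ∑ i, (EuclideanSpace.proj i : Eu m →L[ℝ] ℝ).smulRight (ξ i y)

lemma frame_apply {D m : ℕ} (ξ : Fin m → (Eu D → Eu D)) (y : Eu D) (a : Eu m) :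
    frame ξ y a = ∑ i, a i • ξ i y := by
  simp [frame]

lemma frame_smooth {D m : ℕ} {ξ : Fin m → (Eu D → Eu D)} (h : ∀ i, ContDiff ℝ ∞ (ξ i)) :
    ContDiff ℝ ∞ (frame ξ) := by
  unfold frame
  refine ContDiff.sum fun i _ => ?_
  exact contDiff_const.smulRight (h i)

lemma frame_range {D m : ℕ} (ξ : Fin m → (Eu D → Eu D)) (y : Eu D) :
    LinearMap.range (frame ξ y : Eu m →ₗ[ℝ] Eu D) = Submodule.span ℝ (Set.range fun i => ξ i y) := by
  apply le_antisymm
  · rintro _ ⟨a, rfl⟩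
    change frame ξ y a ∈ _
    rw [frame_apply]
    exact Submodule.sum_mem _ fun i _ => Submodule.smul_mem _ _ (Submodule.subset_span ⟨i, rfl⟩)
  · refine Submodule.span_le.2 ?_
    rintro _ ⟨i, rfl⟩
    refine ⟨EuclideanSpace.single i 1, ?_⟩
    change frame ξ y _ = _
    rw [frame_apply, Finset.sum_eq_single i]
    · simp
    · intro j _ hj
      simp [hj]
    · simp

lemma exists_goodChart {k : SpaceFormKind} {D n m : ℕ} {S : Set (Eu D)}
    {ν₁ : Eu D → Submodule ℝ (Eu D)} (hSF : S ⊆ spaceForm k D) (hsub : IsSubmanifold S n)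
    (hb : IsParallelNormalSubbundle k S ν₁ m) {p : Eu D} (hp : p ∈ S) :
    ∃ φ U ρ N X L, GoodChart (n := n) (m := m) k S ν₁ φ U ρ N X L ∧ p ∈ N := by
  obtain ⟨φ, U0, ρ, N0, P0, hpN0⟩ := exists_preChart hsub hp
  obtain ⟨V, hV, ξ, hξ, hspan⟩ := hb.smooth p hp
  have hinj : Function.Injective (frame ξ p : Eu m →ₗ[ℝ] Eu D) := by
    rw [← LinearMap.ker_eq_bot]
    have h1 := (frame ξ p : Eu m →ₗ[ℝ] Eu D).finrank_range_add_finrank_ker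
    rw [frame_range, ← hspan p ⟨mem_of_mem_nhds hV, hp⟩, hb.rank p hp, finrank_euclideanSpace,
      Fintype.card_fin] at h1
    exact Submodule.finrank_eq_zero.1 (by omega)
  obtain ⟨L', hL'⟩ := (frame ξ p : Eu m →ₗ[ℝ] Eu D).exists_leftInverse_of_injective
    (LinearMap.ker_eq_bot.2 hinj)
  set L : Eu D →L[ℝ] Eu m := LinearMap.toContinuousLinearMap L' with hL
  have hC := frame_smooth hξ
  have hLC : ContDiff ℝ ∞ fun y => L.comp (frame ξ y) := contDiff_const.clm_comp hC
  have hid : L.comp (frame ξ p) =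
      ((ContinuousLinearEquiv.refl ℝ (Eu m) : Eu m ≃L[ℝ] Eu m) : Eu m →L[ℝ] Eu m) := by
    ext1 z
    exact LinearMap.congr_fun hL' z
  have hev : ∀ᶠ y in 𝓝 p, L.comp (frame ξ y) ∈
      range ((↑) : (Eu m ≃L[ℝ] Eu m) → (Eu m →L[ℝ] Eu m)) := by
    refine hLC.continuous.continuousAt.eventually_mem ?_
    rw [hid]
    exact ContinuousLinearEquiv.nhds _
  obtain ⟨N1, hN1s, hN1o, hpN1⟩ := mem_nhds_iff.1 (inter_mem hV hev)
  have P := P0.restrict hN1o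
  set U := U0 ∩ φ ⁻¹' N1
  set Xh : Eu D → (Eu m →L[ℝ] Eu D) := fun y =>
    (frame ξ y).comp (ContinuousLinearMap.inverse (L.comp (frame ξ y))) with hXh
  have hXhC : ∀ y ∈ N1, ContDiffAt ℝ ∞ Xh y := by
    intro y hy
    obtain ⟨e, he⟩ := (hN1s hy).2
    have h1 : (L.comp (frame ξ y)).IsInvertible := ⟨e, he⟩
    have h3 : ContDiffAt ℝ ∞ (ContinuousLinearMap.inverse : (Eu m →L[ℝ] Eu m) → (Eu m →L[ℝ] Eu m))
      (L.comp (frame ξ y)) := h1.contDiffAt_map_inverse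
    have h2 : ContDiffAt ℝ ∞ (fun y => ContinuousLinearMap.inverse (L.comp (frame ξ y))) y :=
      ContDiffAt.comp (g := ContinuousLinearMap.inverse) (f := fun y => L.comp (frame ξ y)) y h3
        hLC.contDiffAt
    exact hC.contDiffAt.clm_comp h2
  have hXC : ContDiffOn ℝ ∞ (fun x => Xh (φ x)) U := fun x hx =>
    (ContDiffAt.comp x (hXhC _ hx.2) (P.cφ hx)).contDiffWithinAt
  have hnorm : ∀ x ∈ U, ∀ a, L (Xh (φ x) a) = a := by
    intro x hx a
    obtain ⟨e, he⟩ := (hN1s hx.2).2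
    have h1 : L (Xh (φ x) a) = (L.comp (frame ξ (φ x)))
      (ContinuousLinearMap.inverse (L.comp (frame ξ (φ x))) a) := rfl
    rw [h1, ← he, ContinuousLinearMap.inverse_equiv]
    simp
  have hrng : ∀ x ∈ U, ν₁ (φ x) = LinearMap.range (Xh (φ x) : Eu m →ₗ[ℝ] Eu D) := by
    intro x hx
    obtain ⟨e, he⟩ := (hN1s hx.2).2
    rw [hspan _ ⟨(hN1s hx.2).1, P.mapS x hx⟩, ← frame_range]
    apply le_antisymm
    · rintro _ ⟨a, rfl⟩
      refine ⟨e a, ?_⟩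
      change frame ξ (φ x) (ContinuousLinearMap.inverse (L.comp (frame ξ (φ x))) (e a)) =
        frame ξ (φ x) a
      rw [← he, ContinuousLinearMap.inverse_equiv]
      simp
    · rintro _ ⟨a, rfl⟩
      exact ⟨_, rfl⟩
  have orth : ∀ x ∈ U, ∀ a w, bil k D (Xh (φ x) a) (fderiv ℝ φ x w) = 0 := by
    intro x hx a w
    rw [bil_apply]
    refine (hb.normal _ (P.mapS x hx) _ ?_).2 _ ?_
    · rw [hrng x hx]; exact ⟨a, rfl⟩
    · rw [P.tangent hx]; exact ⟨w, rfl⟩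
  refine ⟨φ, U, ρ, N0 ∩ N1, fun x => Xh (φ x), L, ⟨⟨P.isOpen, P.smooth, hXC, bil_symm k, orth,
    par_of_parallel P hSF hb hXC hrng hnorm orth, hnorm, fun x hx => P.pos hSF hx⟩, P, hrng⟩,
    hpN0, hpN1⟩

end GNull

end

section
open Set Filter Topology
open scoped ContDiff
set_option maxSynthPendingDepth 6
set_option linter.unusedSectionVars false

namespace GNull

lemma deriv_contDiffAt {E : Type*} [NormedAddCommGroup E] [NormedSpace ℝ E] {f : ℝ → E} {t : ℝ}
    (h : ContDiffAt ℝ ∞ f t) : ContDiffAt ℝ ∞ (deriv f) t := by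
  have h1 : ContDiffAt ℝ ∞ (fderiv ℝ f) t := h.fderiv_right (m := ∞) (by simp)
  have h2 : deriv f = fun s => fderiv ℝ f s 1 := by
    ext s; exact fderiv_apply_one_eq_deriv.symm
  rw [h2]
  exact h1.clm_apply contDiffAt_const

namespace GoodChart
variable {k : SpaceFormKind} {D n m : ℕ} {S : Set (Eu D)} {φ : Eu n → Eu D} {U : Set (Eu n)}
  {ρ : Eu D → Eu n} {N : Set (Eu D)} {ν₁ : Eu D → Submodule ℝ (Eu D)}
  {X : Eu n → (Eu m →L[ℝ] Eu D)} {L : Eu D →L[ℝ] Eu m}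
  (G : GoodChart k S ν₁ φ U ρ N X L)
include G

set_option maxHeartbeats 1000000 in
lemma null_eq {x : Eu n} (hx : x ∈ U) : gNullityAt k S ν₁ (φ x) =
    ((LinearMap.ker (fderiv ℝ X x : Eu n →ₗ[ℝ] (Eu m →L[ℝ] Eu D))).map
      (fderiv ℝ φ x : Eu n →ₗ[ℝ] Eu D) : Submodule ℝ (Eu D)) := by
  apply Subset.antisymm
  · rintro v ⟨hv, H⟩
    rw [G.pre.tangent hx] at hv
    obtain ⟨u, rfl⟩ := hv
    refine ⟨u, ?_, rfl⟩
    change fderiv ℝ X x u = 0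
    rw [G.core.dX_eq_zero_iff hx]
    intro a w
    obtain ⟨σ, hσ, hσ0, hσ1, hU⟩ := G.pre.exists_curve hx u
    have hx0 : x + σ 0 • u = x := by rw [hσ0, zero_smul, add_zero]
    have h1 : HasDerivAt (fun t => x + σ t • u) u 0 := by
      have := (hσ1.smul_const u).const_add x
      rwa [one_smul] at this
    have h2 : HasDerivAt (fun t => φ (x + σ t • u)) (fderiv ℝ φ x u) 0 := by
      have h3 : HasFDerivAt φ (fderiv ℝ φ x) (x + σ 0 • u) := by
        rw [hx0]; exact G.pre.dφ hx
      exact h3.comp_hasDerivAt (0:ℝ) h1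
    have h3 : HasDerivAt (fun t => fderiv ℝ φ (x + σ t • u) w)
        (fderiv ℝ (fderiv ℝ φ) x u w) 0 := by
      have h4 : HasFDerivAt (fderiv ℝ φ) (fderiv ℝ (fderiv ℝ φ) x) (x + σ 0 • u) := by
        rw [hx0]; exact G.pre.dφ1 hx
      have h5 := (h4.comp_hasDerivAt (0:ℝ) h1).clm_apply (hasDerivAt_const (0:ℝ) w)
      refine h5.congr_deriv ?_
      simp
    have h4 := H (fun t => φ (x + σ t • u)) (fun t => fderiv ℝ φ (x + σ t • u) w)
      (G.pre.curve_smooth hσ hU) (fun t => G.pre.mapS _ (hU t)) (by simp only [hx0]) h2.deriv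
      ?_ ?_ (X x a) ?_
    · rw [h3.deriv, ← bil_apply, bil_symm] at h4
      have h5 := G.core.d_orth hx a u w
      rw [h4, add_zero] at h5
      exact h5
    · have h6 : ContDiffOn ℝ ∞ (fderiv ℝ φ) U := fun y hy => (G.pre.cφ1 hy).contDiffWithinAt
      exact (h6.comp_contDiff (contDiff_const.add (hσ.smul contDiff_const)) hU).clm_apply
        contDiff_const
    · intro t
      rw [G.pre.tangent (hU t)]; exact ⟨w, rfl⟩
    · rw [G.rng x hx]; exact ⟨a, rfl⟩
  · rintro _ ⟨u, hu, rfl⟩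
    change fderiv ℝ X x u = 0 at hu
    refine ⟨by rw [G.pre.tangent hx]; exact ⟨u, rfl⟩, ?_⟩
    intro c W hc hcS hc0 hc1 hW hWT ξ hξ
    rw [G.rng x hx] at hξ
    obtain ⟨a, rfl⟩ := hξ
    have hN : c 0 ∈ N := by rw [hc0]; exact G.pre.mapN x hx
    have hpull := G.pre.pull hc hcS hN
    have hx0 : ρ (c 0) = x := by rw [hc0, G.pre.left x hx]
    have h1 := G.pre.pull_deriv hc hcS hN
    rw [hx0, hc1] at h1
    have h2 := G.pre.inj hx h1
    have h3 : HasDerivAt (fun t => ρ (c t)) u 0 := by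
      rw [h2]
      exact (hpull.self_of_nhds.2.2.differentiableAt (by simp)).hasDerivAt
    have h4 : HasFDerivAt X (fderiv ℝ X x) (ρ (c 0)) := by rw [hx0]; exact G.core.dX hx
    have h5 := ((bil k D).hasFDerivAt.comp_hasDerivAt (0:ℝ)
      ((hW.differentiable (by simp)) 0).hasDerivAt).clm_apply
      ((h4.comp_hasDerivAt (0:ℝ) h3).clm_apply (hasDerivAt_const (0:ℝ) a))
    have h6 : HasDerivAt (fun _ : ℝ => (0:ℝ)) 0 0 := hasDerivAt_const _ _
    have h7 := h5.unique (h6.congr_of_eventuallyEq ?_)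
    · simp only [Function.comp_apply, hx0, hu, _root_.zero_apply, map_zero, add_zero] at h7
      rw [← bil_apply]; exact h7
    · filter_upwards [hpull] with t ht
      have h8 := hWT t
      rw [← ht.2.1, G.pre.tangent ht.1] at h8
      obtain ⟨w, hw⟩ := h8
      simp only [Function.comp_apply]
      rw [← hw, bil_symm]
      exact G.core.orth _ ht.1 a w

lemma null_finrank {x : Eu n} (hx : x ∈ U) :
    Set.finrank ℝ (gNullityAt k S ν₁ (φ x)) = kd (fderiv ℝ X x) := by
  rw [G.null_eq hx, Set.finrank, Submodule.span_eq]
  exact (LinearEquiv.finrank_eq (Submodule.equivMapOfInjective _ (G.pre.inj hx) _)).symm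

lemma null_mem {x u : Eu n} (hx : x ∈ U) :
    fderiv ℝ φ x u ∈ gNullityAt k S ν₁ (φ x) ↔ fderiv ℝ X x u = 0 := by
  rw [G.null_eq hx]
  constructor
  · rintro ⟨u', h', he⟩
    have := G.pre.inj hx he
    rw [← this]; exact h'
  · intro h
    exact ⟨u, h, rfl⟩

set_option maxHeartbeats 2000000 in
lemma ode {γ : ℝ → Eu D} (hγ : IsGeodesicOn k S γ) {t0 : ℝ} (hN : γ t0 ∈ N) :
    ∀ᶠ t in 𝓝 t0, Ode (bil k D) φ (fun s => ρ (γ s)) (deriv fun s => ρ (γ s)) t := by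
  filter_upwards [hγ.smooth.continuous.continuousAt.eventually_mem (G.pre.isOpenN.mem_nhds hN)]
    with t ht
  have hpull := G.pre.pull hγ.smooth hγ.mem ht
  obtain ⟨hU, hφ, hC⟩ := hpull.self_of_nhds
  have hd1 := (hC.differentiableAt (by simp)).hasDerivAt
  have hd2 := ((deriv_contDiffAt hC).differentiableAt (by simp)).hasDerivAt
  refine ⟨hd1, ?_⟩
  refine hd2.congr_deriv ?_
  set x := fun s => ρ (γ s) with hxdef
  have h1 : deriv γ =ᶠ[𝓝 t] fun s => fderiv ℝ φ (x s) (deriv x s) := by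
    filter_upwards [hγ.smooth.continuous.continuousAt.eventually_mem (G.pre.isOpenN.mem_nhds ht)]
      with s hs using G.pre.pull_deriv hγ.smooth hγ.mem hs
  have h2 := ((G.pre.dφ1 hU).comp_hasDerivAt t hd1).clm_apply hd2
  have h3 := (h2.congr_of_eventuallyEq h1).deriv
  simp only [Function.comp_apply] at h3
  have hpos := G.core.pos _ hU
  have h4 : star (bil k D) (fderiv ℝ φ (x t)) (fderiv ℝ φ (x t) (deriv (deriv x) t)) =
      - star (bil k D) (fderiv ℝ φ (x t)) (fderiv ℝ (fderiv ℝ φ) (x t) (deriv x t) (deriv x t)) := by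
    ext w
    have h5 := hγ.accel_normal t (fderiv ℝ φ (x t) w) (by
      rw [← hφ, G.pre.tangent hU]; exact ⟨w, rfl⟩)
    rw [h3, ← bil_apply, map_add, _root_.add_apply] at h5
    simp only [_root_.neg_apply, star_apply]
    linarith
  rw [acc, ← map_neg, ← h4, gi_g _ _ hpos]

end GoodChart

end GNull

end

section
open Set Filter Topology
open scoped ContDiff
set_option maxSynthPendingDepth 6
set_option linter.unusedSectionVars false

namespace GNull

/-- the geodesic is at time `t` in the minimal set and tangent to the nullity -/
def Good {D : ℕ} (k : SpaceFormKind) (S : Set (Eu D)) (ν₁ : Eu D → Submodule ℝ (Eu D))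
    (γ : ℝ → Eu D) (t : ℝ) : Prop :=
  γ t ∈ gMinNullitySet k S ν₁ ∧ deriv γ t ∈ gNullityAt k S ν₁ (γ t)

variable {k : SpaceFormKind} {D n m : ℕ} {S : Set (Eu D)} {ν₁ : Eu D → Submodule ℝ (Eu D)}

lemma null_smul (hSF : S ⊆ spaceForm k D) (hsub : IsSubmanifold S n)
    (hb : IsParallelNormalSubbundle k S ν₁ m) {y v : Eu D} (hy : y ∈ S)
    (hv : v ∈ gNullityAt k S ν₁ y) (a : ℝ) : a • v ∈ gNullityAt k S ν₁ y := by
  obtain ⟨φ, U, ρ, N, X, L, G, hN⟩ := exists_goodChart hSF hsub hb hy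
  have h := G.pre.right y hy hN
  rw [← h, G.null_eq (G.pre.mapU y hy hN)] at hv ⊢
  exact Submodule.smul_mem _ a hv

lemma good_forward (hSF : S ⊆ spaceForm k D) (hsub : IsSubmanifold S n)
    (hb : IsParallelNormalSubbundle k S ν₁ m) {γ : ℝ → Eu D} (hγ : IsGeodesicOn k S γ) {t0 : ℝ}
    (h0 : Good k S ν₁ γ t0) : ∀ᶠ t in 𝓝[≥] t0, Good k S ν₁ γ t := by
  obtain ⟨φ, U, ρ, N, X, L, G, hN⟩ := exists_goodChart hSF hsub hb (hγ.mem t0)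
  have hpull := G.pre.pull hγ.smooth hγ.mem hN
  have hode := G.ode hγ hN
  have hNev := hγ.smooth.continuous.continuousAt.eventually_mem (G.pre.isOpenN.mem_nhds hN)
  obtain ⟨hU, hφ, hC⟩ := hpull.self_of_nhds
  have hfr : Set.finrank ℝ (gNullityAt k S ν₁ (γ t0)) = kd (fderiv ℝ X (ρ (γ t0))) := by
    rw [← G.null_finrank hU, hφ]
  have hreg : ∀ᶠ y in 𝓝 (ρ (γ t0)), kd (fderiv ℝ X (ρ (γ t0))) ≤ kd (fderiv ℝ X y) := by
    filter_upwards [G.pre.isOpen.mem_nhds hU] with y hy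
    rw [← hfr, ← G.null_finrank hy]
    exact h0.1.2 _ (G.pre.mapS y hy)
  have hz : fderiv ℝ X (ρ (γ t0)) (deriv (fun s => ρ (γ s)) t0) = 0 := by
    rw [← G.null_mem hU, hφ, ← G.pre.pull_deriv hγ.smooth hγ.mem hN]
    exact h0.2
  have h1 := G.core.core_forward (x := fun s => ρ (γ s)) hU hreg hode hz
  have h2 := finrank_ker_eventually_le (fderiv ℝ X) (ρ (γ t0)) ((G.core.cX1 hU).of_le (by simp))
  have h3 := (hC.continuousAt.tendsto.eventually h2)
  filter_upwards [h1, nhdsWithin_le_nhds h3, nhdsWithin_le_nhds hpull, nhdsWithin_le_nhds hNev]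
    with t ht1 ht3 htp htN
  refine ⟨⟨hγ.mem t, fun r hr => ?_⟩, ?_⟩
  · rw [← htp.2.1, G.null_finrank htp.1]
    refine le_trans ht3 ?_
    refine le_trans (le_of_eq hfr.symm) (h0.1.2 r hr)
  · rw [G.pre.pull_deriv hγ.smooth hγ.mem htN]
    have := (G.null_mem htp.1).2 ht1
    rwa [htp.2.1] at this

lemma good_limit (hSF : S ⊆ spaceForm k D) (hsub : IsSubmanifold S n)
    (hb : IsParallelNormalSubbundle k S ν₁ m) {γ : ℝ → Eu D} (hγ : IsGeodesicOn k S γ)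
    {p : Eu D} (hp : p ∈ gMinNullitySet k S ν₁) {b : ℝ}
    (h0 : ∀ᶠ t in 𝓝[<] b, Good k S ν₁ γ t) : Good k S ν₁ γ b := by
  obtain ⟨φ, U, ρ, N, X, L, G, hN⟩ := exists_goodChart hSF hsub hb (hγ.mem b)
  have hpull := G.pre.pull hγ.smooth hγ.mem hN
  have hode := G.ode hγ hN
  have hNev := hγ.smooth.continuous.continuousAt.eventually_mem (G.pre.isOpenN.mem_nhds hN)
  obtain ⟨hU, hφ, hC⟩ := hpull.self_of_nhds
  have hlt : ∀ᶠ t in 𝓝[<] b, kd (fderiv ℝ X (ρ (γ t))) ≤ Set.finrank ℝ (gNullityAt k S ν₁ p) ∧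
      fderiv ℝ X (ρ (γ t)) (deriv (fun s => ρ (γ s)) t) = 0 := by
    filter_upwards [h0, nhdsWithin_le_nhds hpull, nhdsWithin_le_nhds hNev] with t ht htp htN
    constructor
    · rw [← G.null_finrank htp.1, htp.2.1]
      exact ht.1.2 p hp.1
    · rw [← G.null_mem htp.1, htp.2.1, ← G.pre.pull_deriv hγ.smooth hγ.mem htN]
      exact ht.2
  have hmin : ∀ y ∈ U, Set.finrank ℝ (gNullityAt k S ν₁ p) ≤ kd (fderiv ℝ X y) := by
    intro y hy
    rw [← G.null_finrank hy]
    exact hp.2 _ (G.pre.mapS y hy)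
  obtain ⟨h1, h2⟩ := G.core.core_limit (x := fun s => ρ (γ s)) hU hode hmin hlt
  refine ⟨⟨hγ.mem b, fun r hr => ?_⟩, ?_⟩
  · rw [← hφ, G.null_finrank hU]
    exact le_trans h1 (hp.2 r hr)
  · rw [G.pre.pull_deriv hγ.smooth hγ.mem hN]
    have := (G.null_mem hU).2 h2
    rwa [hφ] at this

lemma good_nonneg (hSF : S ⊆ spaceForm k D) (hsub : IsSubmanifold S n)
    (hb : IsParallelNormalSubbundle k S ν₁ m) {γ : ℝ → Eu D} (hγ : IsGeodesicOn k S γ)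
    (h0 : Good k S ν₁ γ 0) (t : ℝ) (ht : 0 ≤ t) : Good k S ν₁ γ t := by
  by_contra hbad
  set E : Set ℝ := {s | 0 ≤ s ∧ ¬ Good k S ν₁ γ s} with hE
  have hne : E.Nonempty := ⟨t, ht, hbad⟩
  have hbdd : BddBelow E := ⟨0, fun s hs => hs.1⟩
  set b := sInf E with hbdef
  have hb0 : 0 ≤ b := le_csInf hne fun s hs => hs.1
  have hlt : ∀ s, 0 ≤ s → s < b → Good k S ν₁ γ s := by
    intro s hs hsb
    by_contra h
    exact absurd (csInf_le hbdd (show s ∈ E from ⟨hs, h⟩)) (not_le.2 hsb)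
  have hgb : Good k S ν₁ γ b := by
    rcases hb0.eq_or_lt with h | h
    · rw [← h]; exact h0
    · refine good_limit hSF hsub hb hγ h0.1 ?_
      have : Ioo 0 b ∈ 𝓝[<] b := Ioo_mem_nhdsLT h
      filter_upwards [this] with s hs using hlt s hs.1.le hs.2
  have h1 := good_forward hSF hsub hb hγ hgb
  obtain ⟨c, hc, hcs⟩ := (mem_nhdsGE_iff_exists_Ico_subset).1 h1
  obtain ⟨s, hsE, hsc⟩ := exists_lt_of_csInf_lt hne (show sInf E < c from hc)
  exact hsE.2 (hcs ⟨csInf_le hbdd hsE, hsc⟩)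

lemma deriv_rev (γ : ℝ → Eu D) (t : ℝ) : deriv (fun s => γ (-s)) t = - deriv γ (-t) :=
  deriv_comp_neg γ t

lemma geod_rev {γ : ℝ → Eu D} (hγ : IsGeodesicOn k S γ) : IsGeodesicOn k S (fun s => γ (-s)) where
  smooth := hγ.smooth.comp contDiff_neg
  mem t := hγ.mem _
  accel_normal t v hv := by
    have h1 : deriv (fun s => γ (-s)) = fun s => - deriv γ (-s) := funext (deriv_rev γ)
    have h2 : deriv (deriv (fun s => γ (-s))) t = deriv (deriv γ) (-t) := by
      rw [h1, deriv.fun_neg, deriv_comp_neg (deriv γ), neg_neg]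
    rw [h2]
    exact hγ.accel_normal (-t) v hv

lemma good_all (hSF : S ⊆ spaceForm k D) (hsub : IsSubmanifold S n)
    (hb : IsParallelNormalSubbundle k S ν₁ m) {γ : ℝ → Eu D} (hγ : IsGeodesicOn k S γ)
    (h0 : Good k S ν₁ γ 0) (t : ℝ) : Good k S ν₁ γ t := by
  rcases le_total 0 t with ht | ht
  · exact good_nonneg hSF hsub hb hγ h0 t ht
  · have h1 : Good k S ν₁ (fun s => γ (-s)) 0 := by
      refine ⟨by simpa using h0.1, ?_⟩
      rw [deriv_rev]
      have := null_smul hSF hsub hb (hγ.mem 0) h0.2 (-1)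
      simpa using this
    have h2 := good_nonneg hSF hsub hb (geod_rev hγ) h1 (-t) (by linarith)
    refine ⟨by simpa using h2.1, ?_⟩
    have h3 := h2.2
    rw [deriv_rev] at h3
    simp only [neg_neg] at h3
    have := null_smul hSF hsub hb (hγ.mem t) h3 (-1)
    simpa using this

lemma leaf_concat (hSF : S ⊆ spaceForm k D) (hsub : IsSubmanifold S n)
    (hb : IsParallelNormalSubbundle k S ν₁ m) {p q : Eu D}
    (hq : q ∈ gLeafThrough k S ν₁ (gMinNullitySet k S ν₁) p) {γ : ℝ → Eu D}
    (hγ : IsGeodesicOn k S γ) (hγ0 : γ 0 = q) (hgood : ∀ t, Good k S ν₁ γ t) (T : ℝ) :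
    γ T ∈ gLeafThrough k S ν₁ (gMinNullitySet k S ν₁) p := by
  obtain ⟨c, hc, hcA, hcN, hc0, hc1⟩ := hq
  set f : ℝ → ℝ := fun t => Real.smoothTransition (2 * t) with hf
  set g : ℝ → ℝ := fun t => T * Real.smoothTransition (2 * t - 1) with hg
  have hst : ContDiff ℝ ∞ Real.smoothTransition := Real.smoothTransition.contDiff
  have hfC : ContDiff ℝ ∞ f := hst.comp (by fun_prop)
  have hg1C : ContDiff ℝ ∞ (fun t : ℝ => Real.smoothTransition (2 * t - 1)) :=
    hst.comp (by fun_prop)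
  have hgC : ContDiff ℝ ∞ g := contDiff_const.mul hg1C
  have hleft : ∀ t : ℝ, t ≤ 1/2 → g t = 0 ∧ deriv g t = 0 := by
    intro t ht
    have h1 : Real.smoothTransition (2 * t - 1) = 0 :=
      Real.smoothTransition.zero_of_nonpos (by linarith)
    refine ⟨by simp [hg, h1], ?_⟩
    have h2 : IsLocalMin (fun t : ℝ => Real.smoothTransition (2 * t - 1)) t := by
      refine Filter.Eventually.of_forall fun s => ?_
      beta_reduce; rw [h1]; exact Real.smoothTransition.nonneg _
    have h3 := h2.deriv_eq_zero
    simp only [hg]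
    rw [deriv_const_mul _ (hg1C.differentiable (by simp) t), h3, mul_zero]
  have hright : ∀ t : ℝ, 1/2 ≤ t → f t = 1 ∧ deriv f t = 0 := by
    intro t ht
    have h1 : f t = 1 := Real.smoothTransition.one_of_one_le (by linarith)
    refine ⟨h1, ?_⟩
    have h2 : IsLocalMax f t := by
      refine Filter.Eventually.of_forall fun s => ?_
      rw [h1]; exact Real.smoothTransition.le_one _
    exact h2.deriv_eq_zero
  set w : ℝ → Eu D := fun t => c (f t) + γ (g t) - q with hw
  have hwC : ContDiff ℝ ∞ w := ((hc.comp hfC).add (hγ.smooth.comp hgC)).sub contDiff_const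
  have hwd : ∀ t, deriv w t = deriv f t • deriv c (f t) + deriv g t • deriv γ (g t) := by
    intro t
    have h1 := (hfC.differentiable (by simp) t).hasDerivAt
    have h2 := (hgC.differentiable (by simp) t).hasDerivAt
    have h3 := ((hc.differentiable (by simp)) (f t)).hasDerivAt
    have h4 := ((hγ.smooth.differentiable (by simp)) (g t)).hasDerivAt
    exact (((h3.scomp t h1).add (h4.scomp t h2)).sub_const q).deriv
  have hwl : ∀ t : ℝ, t ≤ 1/2 → w t = c (f t) := by
    intro t ht
    simp only [hw]
    rw [(hleft t ht).1, hγ0, add_sub_cancel_right]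
  have hwr : ∀ t : ℝ, 1/2 ≤ t → w t = γ (g t) := by
    intro t ht
    simp only [hw]
    rw [(hright t ht).1, hc1, add_sub_cancel_left]
  refine ⟨w, hwC, fun t => ?_, fun t => ?_, ?_, ?_⟩
  · rcases le_total t (1/2) with ht | ht
    · rw [hwl t ht]; exact hcA _
    · rw [hwr t ht]; exact (hgood _).1
  · rw [hwd]
    rcases le_total t (1/2) with ht | ht
    · rw [hwl t ht, (hleft t ht).2, zero_smul, add_zero]
      exact null_smul hSF hsub hb (hcA _).1 (hcN _) _
    · rw [hwr t ht, (hright t ht).2, zero_smul, zero_add]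
      exact null_smul hSF hsub hb (hγ.mem _) (hgood _).2 _
  · rw [hwl 0 (by norm_num)]
    simp [hf, hc0]
  · rw [hwr 1 (by norm_num)]
    have : g 1 = T := by
      simp only [hg]
      rw [Real.smoothTransition.one_of_one_le (by norm_num), mul_one]
    rw [this]

theorem main_result (hSF : S ⊆ spaceForm k D) (hsub : IsSubmanifold S n)
    (hcomplete : GeodComplete k S) (hb : IsParallelNormalSubbundle k S ν₁ m) (p : Eu D) :
    ∀ q ∈ gLeafThrough k S ν₁ (gMinNullitySet k S ν₁) p, ∀ v ∈ gNullityAt k S ν₁ q,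
      ∃ γ : ℝ → Eu D,
        IsGeodesicOn k S γ ∧ γ 0 = q ∧ deriv γ 0 = v ∧
        ∀ t, γ t ∈ gLeafThrough k S ν₁ (gMinNullitySet k S ν₁) p := by
  intro q hq v hv
  have hqA : q ∈ gMinNullitySet k S ν₁ := by
    obtain ⟨c, -, hcA, -, -, hc1⟩ := hq
    rw [← hc1]; exact hcA 1
  obtain ⟨γ, hγ, hγ0, hγ1⟩ := hcomplete q hqA.1 v hv.1
  refine ⟨γ, hγ, hγ0, hγ1, leaf_concat hSF hsub hb hq hγ hγ0 ?_⟩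
  refine good_all hSF hsub hb hγ ⟨by rwa [hγ0], by rwa [hγ0, hγ1]⟩

end GNull

end

/-- **Completeness of the leaves of the generalized nullity distribution.**
Let `M = S` be a complete Riemannian manifold isometrically immersed as an `n`-dimensional
submanifold of a space form, and let `ν₁` be a parallel sub-bundle of the normal bundle of `M`
(parallel with respect to the normal connection).  Let `𝒩¹_p` be the common kernel of the shape
operators `A_ξ`, `ξ ∈ ν₁(p)`.  Then every maximal integral manifold of `𝒩¹` through a point where
`dim 𝒩¹` attains its minimal value over `M` is a complete Riemannian manifold with the induced
metric: every geodesic initial condition tangent to the leaf gives rise to a geodesic of `M`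
defined on all of `ℝ` and remaining inside the leaf. -/
theorem generalized_nullity_leaf_complete (k : SpaceFormKind) (n codim m : ℕ)
    (S : Set (EuclideanSpace ℝ (Fin (ambientDim k n codim))))
    (ν₁ : EuclideanSpace ℝ (Fin (ambientDim k n codim)) →
      Submodule ℝ (EuclideanSpace ℝ (Fin (ambientDim k n codim))))
    (hSF : S ⊆ spaceForm k (ambientDim k n codim))
    (hsub : IsSubmanifold S n)
    (hcomplete : GeodComplete k S)
    (hbundle : IsParallelNormalSubbundle k S ν₁ m)
    (p : EuclideanSpace ℝ (Fin (ambientDim k n codim)))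
    (hp : p ∈ gMinNullitySet k S ν₁) :
    ∀ q ∈ gLeafThrough k S ν₁ (gMinNullitySet k S ν₁) p, ∀ v ∈ gNullityAt k S ν₁ q,
      ∃ γ : ℝ → EuclideanSpace ℝ (Fin (ambientDim k n codim)),
        IsGeodesicOn k S γ ∧ γ 0 = q ∧ deriv γ 0 = v ∧
        ∀ t, γ t ∈ gLeafThrough k S ν₁ (gMinNullitySet k S ν₁) p := by
  exact GNull.main_result hSF hsub hcomplete hbundle p
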